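/- arXiv:2002.09789 — 2 statements merged into one kernel-verified Lean document; each statement's English description precedes it below -/
import Mathlib

section
/- There exists a binary self-dual code of length 68 and minimum (nonzero) weight 12 that has exactly 1710 codewords of weight 12 and exactly 8328 codewords of weight 14 (i.e. a self-dual [68,34,12] code with weight enumerator W_{68,1} with β = 317). -/
/-- The dual of a code (submodule of `ι → R`) with respect to the standard bilinear form. -/
def dualCode {R : Type*} [CommRing R] {ι : Type*} [Fintype ι]
    (C : Submodule R (ι → R)) : Submodule R (ι → R) where
  carrier := {x | ∀ c ∈ C, ∑ i, x i * c i = 0}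
  add_mem' := by
    intro a b ha hb c hc
    simp only [Set.mem_setOf_eq] at ha hb ⊢
    simp [Pi.add_apply, add_mul, Finset.sum_add_distrib, ha c hc, hb c hc]
  zero_mem' := by
    intro c hc
    simp
  smul_mem' := by
    intro r a ha c hc
    simp only [Set.mem_setOf_eq] at ha ⊢
    simp [Pi.smul_apply, smul_eq_mul, mul_assoc, ← Finset.mul_sum, ha c hc]

/-- A code is self-dual if it equals its dual. -/
def IsSelfDual {R : Type*} [CommRing R] {ι : Type*} [Fintype ι]
    (C : Submodule R (ι → R)) : Prop :=
  C = dualCode C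


namespace SD68

/-- The list of truth values of `f` on `L`, packed into a natural number. -/
def rep {α : Type} (f : α → Bool) : List α → ℕ
  | [] => 0
  | a :: L => Nat.bit (f a) (rep f L)

/-- A number with `n` ones. -/
def ones (n : ℕ) : ℕ := Nat.sub (Nat.shiftLeft 1 n) 1

def nxt (b : Bool) : ℕ × ℕ → List (ℕ × ℕ) → List (ℕ × ℕ)
  | _, [] => []
  | p, q :: qs =>
    (Nat.add q.1 p.1,
      Nat.lor q.2 (Nat.shiftLeft (bif b then Nat.xor p.2 (ones p.1) else p.2) q.1)) :: nxt b q qs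

def initRow (k : ℕ) : List (ℕ × ℕ) := (1, 0) :: List.replicate k (0, 0)

def row (c k : ℕ) : ℕ → List (ℕ × ℕ)
  | 0 => initRow k
  | n + 1 => nxt (Nat.testBit c n) (0, 0) (row c k n)

def addc : List ℕ → ℕ → List ℕ
  | [], _ => []
  | s :: ss, b => Nat.xor s b :: addc ss (Nat.land s b)

def eqs (o : ℕ) : List ℕ → ℕ → ℕ
  | [], _ => o
  | s :: ss, l => Nat.land (bif Nat.testBit l 0 then s else Nat.xor s o) (eqs o ss (Nat.div l 2))

def popr : ℕ → ℕ → ℕ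
  | 0, x => x
  | d + 1, x => bif Nat.beq x 0 then 0 else
      Nat.add (popr d (Nat.land x (ones (Nat.pow 2 d)))) (popr d (Nat.shiftRight x (Nat.pow 2 d)))

def slices (k : ℕ) : List ℕ → List ℕ
  | [] => [0, 0, 0, 0, 0, 0]
  | c :: cs => addc (slices k cs) ((row c k 34).getD k (0, 0)).2

def total (k : ℕ) : ℕ := ((row 0 k 34).getD k (0, 0)).1

def counts (k : ℕ) (cs : List ℕ) (ls : List ℕ) : List ℕ :=
  ls.map fun l => popr 23 (eqs (ones (total k)) (slices k cs) l)

def rowsP : List ℕ :=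
  [8550095006, 2767467051, 3597826285, 13203618580, 13522335272, 3954643133,
   15434635424, 8841702363, 14493901442, 1623400549, 10191081631, 17166963722,
   11303791363, 6380959312, 4398210996, 11475960709, 4707942096, 5120916896,
   5946866496, 7598765696, 2837837723, 861782169, 12756078951, 5133398412,
   9616829665, 437238403, 12175064287, 9478825221, 14350083762, 13679978492,
   7519215534, 15052305330, 10749601398, 2135300488]

def colsP : List ℕ :=
  [259036838, 7890541955, 6119540269, 10279193783, 7318103209, 8342618742,
   4920255108, 12746212837, 12496326792, 8357015962, 6393915408, 9781596365,
   11926465663, 7509848990, 7398736212, 7352493248, 7176318952, 12520677180,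
   12133459258, 7695174744, 4796655742, 8281542015, 9544939358, 4505277307,
   11638283761, 9431174636, 9613929943, 9182490017, 9124916557, 9293969971,
   10004213541, 7589107815, 4035930457, 7470095832]

/-! ### Bit-slice arithmetic -/

section slices
variable {α : Type}

theorem ones_eq (n : ℕ) : ones n = 2 ^ n - 1 := by
  show (1 <<< n) - 1 = _
  rw [Nat.one_shiftLeft]

theorem rep_lt (f : α → Bool) (L : List α) : rep f L < 2 ^ L.length := by
  induction L with
  | nil => simp [rep]
  | cons a L ih =>
    simp only [rep, List.length_cons, pow_succ, Nat.bit_val]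
    cases f a <;> simp <;> omega

theorem rep_true (L : List α) : rep (fun _ => true) L = ones L.length := by
  rw [ones_eq]
  induction L with
  | nil => simp [rep]
  | cons a L ih =>
    simp only [rep, List.length_cons, pow_succ, Nat.bit_val, ih]
    have := Nat.one_le_two_pow (n := L.length)
    simp; omega

theorem rep_false (L : List α) : rep (fun _ => false) L = 0 := by
  induction L with
  | nil => simp [rep]
  | cons a L ih => simp [rep, ih]

theorem rep_xor (f g : α → Bool) (L : List α) :
    Nat.xor (rep f L) (rep g L) = rep (fun a => xor (f a) (g a)) L := by
  show (rep f L) ^^^ (rep g L) = _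
  induction L with
  | nil => simp [rep]
  | cons a L ih => simp [rep, ← ih, Nat.xor_bit]

theorem rep_land (f g : α → Bool) (L : List α) :
    Nat.land (rep f L) (rep g L) = rep (fun a => f a && g a) L := by
  show (rep f L) &&& (rep g L) = _
  induction L with
  | nil => simp [rep]
  | cons a L ih => simp [rep, ← ih, Nat.land_bit]

theorem rep_not (f : α → Bool) (L : List α) :
    Nat.xor (rep f L) (ones L.length) = rep (fun a => !(f a)) L := by
  rw [← rep_true, rep_xor]; simp

theorem rep_append (f : α → Bool) (L L' : List α) :
    rep f (L ++ L') = Nat.lor (rep f L) (Nat.shiftLeft (rep f L') L.length) := by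
  show _ = rep f L ||| (rep f L' <<< L.length)
  induction L with
  | nil => simp [rep]
  | cons a L ih =>
    simp only [List.cons_append, rep, ih, List.length_cons]
    have : rep f L' <<< (L.length + 1) = Nat.bit false (rep f L' <<< L.length) := by
      simp [Nat.shiftLeft_eq, Nat.bit_val, pow_succ]; ring
    rw [this, Nat.lor_bit]; simp

theorem rep_map {β : Type} (f : α → Bool) (g : β → α) (L : List β) :
    rep f (L.map g) = rep (fun b => f (g b)) L := by
  induction L with
  | nil => simp [rep]
  | cons a L ih => simp [rep, ih]

theorem rep_congr {f g : α → Bool} {L : List α} (h : ∀ a ∈ L, f a = g a) :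
    rep f L = rep g L := by
  induction L with
  | nil => simp [rep]
  | cons a L ih =>
    simp only [rep]
    rw [ih (fun b hb => h b (by simp [hb])), h a (by simp)]

theorem rep_drop (f : α → Bool) (L : List α) (h : ℕ) :
    rep f (L.drop h) = rep f L >>> h := by
  induction h generalizing L with
  | zero => simp
  | succ h ih =>
    cases L with
    | nil => simp [rep]
    | cons a L =>
      simp only [List.drop_succ_cons, ih, rep]
      rw [Nat.add_comm, Nat.shiftRight_add]
      congr 1
      simp [Nat.shiftRight_one, Nat.bit_val]
      cases f a <;> simp <;> omega

theorem rep_take (f : α → Bool) (L : List α) (h : ℕ) :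
    rep f (L.take h) = rep f L % 2 ^ h := by
  induction h generalizing L with
  | zero => simp [rep, Nat.mod_one]
  | succ h ih =>
    cases L with
    | nil => simp [rep]
    | cons a L =>
      simp only [List.take_succ_cons, ih, rep, Nat.bit_val, pow_succ]
      rw [Nat.mul_comm (2 ^ h) 2]
      have e := Nat.mod_mul (x := 2 * rep f L + (f a).toNat) (a := 2) (b := 2 ^ h)
      rw [e]
      have h1 : (2 * rep f L + (f a).toNat) % 2 = (f a).toNat := by
        cases f a <;> simp <;> omega
      have h2 : (2 * rep f L + (f a).toNat) / 2 = rep f L := by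
        cases f a <;> simp <;> omega
      rw [h1, h2]; omega

theorem rep_eq_zero {f : α → Bool} {L : List α} (h : rep f L = 0) : L.countP f = 0 := by
  induction L with
  | nil => simp
  | cons a L ih =>
    simp only [rep, Nat.bit_val] at h
    have h1 : (f a).toNat = 0 := by omega
    have h2 : rep f L = 0 := by omega
    have h3 : f a = false := by cases hf : f a <;> simp_all
    rw [List.countP_cons, ih h2, h3]; simp

theorem popr_rep (f : α → Bool) (d : ℕ) (L : List α) (h : L.length ≤ 2 ^ d) :
    popr d (rep f L) = L.countP f := by
  induction d generalizing L with
  | zero =>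
    match L, h with
    | [], _ => simp [popr, rep]
    | [a], _ => cases hf : f a <;> simp [popr, rep, hf]
  | succ d ih =>
    simp only [popr]
    cases hb : Nat.beq (rep f L) 0 with
    | true =>
      have := Nat.eq_of_beq_eq_true hb
      simp [rep_eq_zero this]
    | false =>
      simp only [cond_false]
      have e1 : Nat.land (rep f L) (ones (Nat.pow 2 d)) = rep f (L.take (2 ^ d)) := by
        rw [rep_take, ones_eq]
        exact Nat.and_two_pow_sub_one_eq_mod _ _
      have e2 : Nat.shiftRight (rep f L) (Nat.pow 2 d) = rep f (L.drop (2 ^ d)) := by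
        rw [rep_drop]; rfl
      rw [e1, e2, ih, ih]
      · change List.countP f (L.take (2 ^ d)) + List.countP f (L.drop (2 ^ d)) = _
        rw [← List.countP_append, List.take_append_drop]
      · simp [pow_succ] at h ⊢; omega
      · simp

theorem testBit_add_toNat (w : ℕ) (b : Bool) :
    xor (w.testBit 0) b = (w + b.toNat).testBit 0 := by
  rcases Nat.mod_two_eq_zero_or_one w with h | h <;> cases b <;>
    simp [Nat.testBit_zero, Nat.add_mod, h]

theorem half_add_toNat (w : ℕ) (b : Bool) :
    (w + b.toNat) / 2 = w / 2 + (w.testBit 0 && b).toNat := by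
  rcases Nat.mod_two_eq_zero_or_one w with h | h <;> cases b <;>
    simp [Nat.testBit_zero, h] <;> omega

/-- `ss` are the binary digits (low first) of the function `w` on the list `L`. -/
def IsSl (L : List α) : List ℕ → (α → ℕ) → Prop
  | [], _ => True
  | s :: ss, w => s = rep (fun a => Nat.testBit (w a) 0) L ∧ IsSl L ss (fun a => w a / 2)

theorem isSl_addc (L : List α) (ss : List ℕ) (w : α → ℕ) (f : α → Bool) (h : IsSl L ss w) :
    IsSl L (addc ss (rep f L)) (fun a => w a + (f a).toNat) := by
  induction ss generalizing w f with
  | nil => trivial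
  | cons s ss ih =>
    obtain ⟨h1, h2⟩ := h
    refine ⟨?_, ?_⟩
    · rw [h1, rep_xor]
      congr 1; funext a
      exact testBit_add_toNat _ _
    · rw [h1, rep_land]
      have := ih _ (fun a => Nat.testBit (w a) 0 && f a) h2
      simpa only [half_add_toNat] using this

theorem eqs_rep (L : List α) (ss : List ℕ) (w : α → ℕ) (h : IsSl L ss w) (l : ℕ) :
    eqs (ones L.length) ss l
      = rep (fun a => decide (w a % 2 ^ ss.length = l % 2 ^ ss.length)) L := by
  induction ss generalizing w l with
  | nil => simp [eqs, Nat.mod_one, rep_true]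
  | cons s ss ih =>
    obtain ⟨h1, h2⟩ := h
    simp only [eqs]
    have e : (bif Nat.testBit l 0 then s else Nat.xor s (ones L.length))
        = rep (fun a => decide (w a % 2 = l % 2)) L := by
      rw [h1, rep_not]
      rcases Nat.mod_two_eq_zero_or_one l with h | h
      · simp only [h, Nat.testBit_zero]
        simp only [zero_ne_one, decide_false, cond_false]
        congr 1; funext a
        rcases Nat.mod_two_eq_zero_or_one (w a) with h | h <;> simp [h]
      · simp [h, Nat.testBit_zero]
    rw [e, ih _ h2, rep_land]
    congr 1; funext a
    rw [← Bool.decide_and]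
    congr 1
    simp only [List.length_cons, pow_succ, Nat.mul_comm (2 ^ ss.length) 2, Nat.mod_mul]
    apply propext
    show (_ ∧ w a / 2 % _ = (l / 2) % _) ↔ _
    have := Nat.mod_lt (w a) (show 0 < 2 by norm_num)
    have := Nat.mod_lt l (show 0 < 2 by norm_num)
    constructor
    · rintro ⟨a, b⟩; rw [a, b]
    · intro h; constructor <;> omega

end slices

/-! ### Enumeration of the `k`-subsets of `range n` -/

def par (c : ℕ) (s : Finset ℕ) : Bool := (s.filter (fun i => c.testBit i = true)).card.bodd

def nxtL (n : ℕ) : List (Finset ℕ) → List (List (Finset ℕ)) → List (List (Finset ℕ))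
  | _, [] => []
  | p, q :: qs => (q ++ p.map (insert n)) :: nxtL n q qs

def rowL (k : ℕ) : ℕ → List (List (Finset ℕ))
  | 0 => [∅] :: List.replicate k []
  | n + 1 => nxtL n [] (rowL k n)

def st (c : ℕ) (L : List (Finset ℕ)) : ℕ × ℕ := (L.length, rep (par c) L)

theorem par_insert (c n : ℕ) (s : Finset ℕ) (h : n ∉ s) :
    par c (insert n s) = xor (par c s) (c.testBit n) := by
  unfold par
  rw [Finset.filter_insert]
  split_ifs with hc
  · rw [Finset.card_insert_of_notMem (by simp [h])]
    simp [hc]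
  · simp [hc]

theorem nxt_st (c n : ℕ) (p : List (Finset ℕ)) (qs : List (List (Finset ℕ)))
    (hp : ∀ s ∈ p, n ∉ s) (hq : ∀ q ∈ qs, ∀ s ∈ q, n ∉ s) :
    nxt (Nat.testBit c n) (st c p) (qs.map (st c)) = (nxtL n p qs).map (st c) := by
  induction qs generalizing p with
  | nil => simp [nxt, nxtL]
  | cons q qs ih =>
    simp only [List.map_cons, nxt, nxtL]
    rw [ih q (hq q (by simp)) (fun q' h => hq q' (by simp [h]))]
    congr 1
    simp only [st, List.length_append, List.length_map, Prod.mk.injEq]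
    refine ⟨rfl, ?_⟩
    rw [rep_append, rep_map, rep_not]
    congr 2
    rw [rep_congr (g := fun s => xor (par c s) (c.testBit n))
      (fun s hs => par_insert c n s (hp s hs))]
    cases c.testBit n <;> simp

theorem length_nxtL (n : ℕ) (p) (qs) : (nxtL n p qs).length = qs.length := by
  induction qs generalizing p with
  | nil => rfl
  | cons q qs ih => simp [nxtL, ih]

theorem nxtL_zero (n : ℕ) (p) (qs) (h : qs ≠ []) :
    (nxtL n p qs).getD 0 [] = qs.getD 0 [] ++ p.map (insert n) := by
  cases qs with
  | nil => simp at h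
  | cons q qs => simp [nxtL]

theorem nxtL_succ (n : ℕ) (p) (qs) (i : ℕ) (h : i + 1 < qs.length) :
    (nxtL n p qs).getD (i + 1) [] = qs.getD (i + 1) [] ++ (qs.getD i []).map (insert n) := by
  induction qs generalizing p i with
  | nil => simp at h
  | cons q qs ih =>
    cases i with
    | zero =>
      simp only [nxtL, List.getD_cons_succ, List.getD_cons_zero]
      exact nxtL_zero n q qs (by rintro rfl; simp at h)
    | succ i =>
      simp only [nxtL, List.getD_cons_succ]
      exact ih q i (by simpa using h)

theorem length_rowL (k n : ℕ) : (rowL k n).length = k + 1 := by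
  induction n with
  | zero => simp [rowL]
  | succ n ih => simp [rowL, length_nxtL, ih]

theorem rowL_spec (k n i : ℕ) (hi : i ≤ k) :
    ((rowL k n).getD i []).Nodup ∧
    ∀ s, s ∈ (rowL k n).getD i [] ↔ s ∈ Finset.powersetCard i (Finset.range n) := by
  induction n generalizing i with
  | zero =>
    cases i with
    | zero => simp [rowL]
    | succ i =>
      have : (rowL k 0).getD (i + 1) [] = [] := by
        simp only [rowL, List.getD_cons_succ]
        rw [List.getD_eq_getElem?_getD, List.getElem?_replicate]
        split_ifs <;> simp
      rw [this]
      simp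
  | succ n ih =>
    have hl := length_rowL k n
    cases i with
    | zero =>
      rw [rowL, nxtL_zero _ _ _ (by rintro h; simp [h] at hl)]
      simpa using ih 0 hi
    | succ i =>
      rw [rowL, nxtL_succ _ _ _ _ (by omega)]
      obtain ⟨d1, m1⟩ := ih (i + 1) hi
      obtain ⟨d2, m2⟩ := ih i (by omega)
      have nin : ∀ j, ∀ s ∈ Finset.powersetCard j (Finset.range n), n ∉ s := by
        intro j s hs hn
        have := (Finset.mem_powersetCard.1 hs).1 hn
        simp at this
      constructor
      · rw [List.nodup_append]
        refine ⟨d1, ?_, ?_⟩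
        · refine d2.map_on ?_
          intro a ha b hb hab
          have ha' := nin _ a ((m2 a).1 ha)
          have hb' := nin _ b ((m2 b).1 hb)
          rw [← Finset.erase_insert ha', ← Finset.erase_insert hb', hab]
        · rintro a ha b hb rfl
          obtain ⟨c, -, rfl⟩ := List.mem_map.1 hb
          exact nin _ _ ((m1 _).1 ha) (by simp)
      · intro s
        rw [Finset.range_add_one, Finset.powersetCard_succ_insert (by simp), Finset.mem_union,
          Finset.mem_image, List.mem_append, List.mem_map, m1]
        simp only [m2]

theorem row_eq (c k n : ℕ) : row c k n = (rowL k n).map (st c) := by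
  induction n with
  | zero => simp [row, initRow, rowL, st, rep, par]
  | succ n ih =>
    rw [row, ih, rowL, ← nxt_st]
    · simp [st, rep]
    · simp
    · intro q hq s hs hn
      obtain ⟨i, hi, rfl⟩ := List.getElem_of_mem hq
      have hi' : i ≤ k := by have := length_rowL k n; omega
      have := (rowL_spec k n i hi').2 s
      rw [List.getD_eq_getElem _ _ hi] at this
      have := (Finset.mem_powersetCard.1 (this.1 hs)).1 hn
      simp at this

/-- The list of all `k`-subsets of `range 34`. -/
def LL (k : ℕ) : List (Finset ℕ) := (rowL k 34).getD k []

theorem row_getD (c k : ℕ) : (row c k 34).getD k (0, 0) = st c (LL k) := by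
  rw [row_eq, LL]
  have : ((0, 0) : ℕ × ℕ) = st c [] := by simp [st, rep]
  rw [this, List.getD_map]

theorem slices_spec (k : ℕ) (cs : List ℕ) :
    (slices k cs).length = 6 ∧ IsSl (LL k) (slices k cs) (fun s => cs.countP (par · s)) := by
  have hl : ∀ ss b, (addc ss b).length = ss.length := by
    intro ss; induction ss with
    | nil => intro b; rfl
    | cons s ss ih => intro b; simp [addc, ih]
  induction cs with
  | nil => simp [slices, IsSl, rep_false]
  | cons c cs ih =>
    simp only [slices, hl, row_getD, st]
    refine ⟨ih.1, ?_⟩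
    have := isSl_addc _ _ _ (par c) ih.2
    convert this using 2 with s
    rw [List.countP_cons]
    cases par c s <;> simp

theorem LL_spec (k : ℕ) : (LL k).Nodup ∧
    ∀ s, s ∈ LL k ↔ s ∈ Finset.powersetCard k (Finset.range 34) :=
  rowL_spec k 34 k le_rfl

theorem choose_le (k : ℕ) (hk : k ≤ 7) : Nat.choose 34 k ≤ 2 ^ 23 := by
  interval_cases k <;> simp [Nat.choose_eq_descFactorial_div_factorial] <;> decide

theorem total_eq (k : ℕ) : total k = (LL k).length := by
  rw [total, row_getD, st]

theorem popr_eqs {α : Type} [DecidableEq α] (L : List α) (d : ℕ) (hlen : L.length ≤ 2 ^ d)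
    (hd : L.Nodup) (S : Finset α) (hS : ∀ s, s ∈ L ↔ s ∈ S) (ss : List ℕ) (w : α → ℕ)
    (hs : IsSl L ss w) (hw : ∀ a, w a < 2 ^ ss.length) (l : ℕ) (hl : l < 2 ^ ss.length) :
    popr d (eqs (ones L.length) ss l) = (S.filter (fun s => w s = l)).card := by
  have hfin : L.toFinset = S := by
    ext s; rw [List.mem_toFinset, hS]
  rw [eqs_rep _ _ _ hs, popr_rep _ _ _ hlen, ← hfin, List.countP_eq_length_filter,
    ← List.toFinset_card_of_nodup (hd.filter _), List.toFinset_filter]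
  congr 1
  apply Finset.filter_congr
  intro s _
  rw [Nat.mod_eq_of_lt (hw s), Nat.mod_eq_of_lt hl]
  simp

theorem length_LL (k : ℕ) (hk : k ≤ 7) : (LL k).length ≤ 2 ^ 23 := by
  obtain ⟨hd, hm⟩ := LL_spec k
  have hfin : (LL k).toFinset = Finset.powersetCard k (Finset.range 34) := by
    ext s; rw [List.mem_toFinset, hm]
  rw [← List.toFinset_card_of_nodup hd, hfin, Finset.card_powersetCard, Finset.card_range]
  exact choose_le k hk

theorem counts_spec (k : ℕ) (hk : k ≤ 7) (cs : List ℕ) (hcs : cs.length = 34) (ls : List ℕ)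
    (hls : ∀ l ∈ ls, l < 64) :
    counts k cs ls = ls.map fun l =>
      ((Finset.powersetCard k (Finset.range 34)).filter
        (fun s => cs.countP (par · s) = l)).card := by
  unfold counts
  apply List.map_congr_left
  intro l hl
  rw [total_eq k]
  obtain ⟨h6, hs⟩ := slices_spec k cs
  refine popr_eqs (LL k) 23 (length_LL k hk) (LL_spec k).1 _ (LL_spec k).2 _ _ hs ?_ l ?_
  · intro s
    have := List.countP_le_length (p := (par · s)) (l := cs)
    rw [h6]; rw [hcs] at this; norm_num; omega
  · rw [h6]; exact hls l hl

/-! ### From subsets to vectors -/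

def NN (n : ℕ) (cs : List ℕ) (k l : ℕ) : ℕ :=
  ((Finset.powersetCard k (Finset.range n)).filter (fun s => cs.countP (par · s) = l)).card

theorem counts_NN (k : ℕ) (hk : k ≤ 7) (cs : List ℕ) (hcs : cs.length = 34) (ls : List ℕ)
    (hls : ∀ l ∈ ls, l < 64) : counts k cs ls = ls.map (NN 34 cs k) :=
  counts_spec k hk cs hcs ls hls

def mat (n : ℕ) (cs : List ℕ) : Matrix (Fin n) (Fin n) (ZMod 2) :=
  fun i j => if (cs.getD j 0).testBit i then 1 else 0

def cnt {n : ℕ} (M : Matrix (Fin n) (Fin n) (ZMod 2)) (k l : ℕ) : ℕ :=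
  (Finset.univ.filter (fun u : Fin n → ZMod 2 =>
    hammingNorm u = k ∧ hammingNorm (Matrix.vecMul u M) = l)).card

theorem countP_ofFn {n : ℕ} (c : Fin n → ℕ) (p : ℕ → Bool) :
    (List.ofFn c).countP p = (Finset.univ.filter (fun j => p (c j) = true)).card := by
  induction n with
  | zero => simp
  | succ n ih =>
    rw [List.ofFn_succ, List.countP_cons, ih, Fin.card_filter_univ_succ]
    split_ifs <;> simp [Function.comp_def]

theorem countP_getD (cs : List ℕ) (n : ℕ) (h : cs.length = n) (p : ℕ → Bool) :
    cs.countP p = (Finset.univ.filter (fun j : Fin n => p (cs.getD j 0) = true)).card := by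
  subst h
  rw [← countP_ofFn]
  congr 1
  apply List.ext_getElem
  · simp
  · intro i h1 h2
    simp [h1]

def supp {n : ℕ} (u : Fin n → ZMod 2) : Finset ℕ :=
  (Finset.univ.filter (fun i => u i ≠ 0)).map Fin.valEmbedding

theorem card_supp {n : ℕ} (u : Fin n → ZMod 2) : (supp u).card = hammingNorm u := by
  simp [supp, hammingNorm]

theorem zmod2_cases (x : ZMod 2) : x = 0 ∨ x = 1 := by
  revert x; decide

theorem vecMul_ne_zero {n : ℕ} (u : Fin n → ZMod 2) (cs : List ℕ) (j : Fin n) :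
    Matrix.vecMul u (mat n cs) j ≠ 0 ↔ par (cs.getD j 0) (supp u) = true := by
  have e : Matrix.vecMul u (mat n cs) j
      = (((supp u).filter (fun i => (cs.getD j 0).testBit i = true)).card : ZMod 2) := by
    rw [supp, Finset.filter_map, Finset.card_map, Finset.filter_filter, Finset.card_filter,
      Matrix.vecMul, dotProduct]
    push_cast
    apply Finset.sum_congr rfl
    intro i _
    rcases zmod2_cases (u i) with h | h <;> simp [h, mat]
  rw [e, par, Ne, ZMod.natCast_eq_zero_iff, ← even_iff_two_dvd, Nat.not_even_iff_odd,
    Nat.odd_iff, Nat.mod_two_of_bodd]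
  cases Nat.bodd _ <;> simp

theorem hammingNorm_vecMul {n : ℕ} (u : Fin n → ZMod 2) (cs : List ℕ) (hcs : cs.length = n) :
    hammingNorm (Matrix.vecMul u (mat n cs)) = cs.countP (par · (supp u)) := by
  rw [countP_getD cs n hcs, hammingNorm]
  congr 1
  apply Finset.filter_congr
  intro j _
  exact vecMul_ne_zero u cs j

theorem cnt_eq (n : ℕ) (cs : List ℕ) (hcs : cs.length = n) (k l : ℕ) : cnt (mat n cs) k l = NN n cs k l := by
  unfold cnt NN
  apply Finset.card_bij (fun u _ => supp u)
  · intro u hu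
    simp only [Finset.mem_filter, Finset.mem_univ, true_and] at hu
    rw [Finset.mem_filter, Finset.mem_powersetCard, card_supp, ← hammingNorm_vecMul u cs hcs]
    refine ⟨⟨?_, hu.1⟩, hu.2⟩
    intro i hi
    simp only [supp, Finset.mem_map] at hi
    obtain ⟨a, -, rfl⟩ := hi
    simp
  · intro u _ v _ h
    have h' := Finset.map_injective _ h
    funext i
    have : u i ≠ 0 ↔ v i ≠ 0 := by
      have := Finset.ext_iff.1 h' i
      simpa using this
    rcases zmod2_cases (u i) with h1 | h1 <;> rcases zmod2_cases (v i) with h2 | h2 <;>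
      simp_all
  · intro s hs
    rw [Finset.mem_filter, Finset.mem_powersetCard] at hs
    obtain ⟨⟨h1, h2⟩, h3⟩ := hs
    have key : supp (fun i : Fin n => if i.val ∈ s then 1 else 0) = s := by
      ext a
      simp only [supp, Finset.mem_map, Finset.mem_filter, Finset.mem_univ, true_and]
      constructor
      · rintro ⟨i, hi, rfl⟩
        by_contra hc
        apply hi
        exact if_neg hc
      · intro ha
        have := Finset.mem_range.1 (h1 ha)
        exact ⟨⟨a, this⟩, by simp [ha], rfl⟩
    refine ⟨fun i => if i.val ∈ s then 1 else 0, ?_, key⟩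
    rw [Finset.mem_filter, hammingNorm_vecMul _ cs hcs, ← card_supp, key]
    exact ⟨Finset.mem_univ _, h2, h3⟩

/-! ### The code -/

section code
variable {n m : ℕ} (PM : Matrix (Fin n) (Fin n) (ZMod 2)) (ee : Fin n ⊕ Fin n ≃ Fin m)

theorem cnt_swap (PM_mul : PM * PM.transpose = 1) (PM_mul' : PM.transpose * PM = 1) (k l : ℕ) : cnt PM k l = cnt PM.transpose l k := by
  unfold cnt
  apply Finset.card_bij' (fun u _ => Matrix.vecMul u PM) (fun u _ => Matrix.vecMul u PM.transpose)
  · intro u hu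
    simp only [Finset.mem_filter, Finset.mem_univ, true_and] at hu ⊢
    rw [Matrix.vecMul_vecMul, PM_mul, Matrix.vecMul_one]
    exact ⟨hu.2, hu.1⟩
  · intro u hu
    simp only [Finset.mem_filter, Finset.mem_univ, true_and] at hu ⊢
    rw [Matrix.vecMul_vecMul, PM_mul', Matrix.vecMul_one]
    exact ⟨hu.2, hu.1⟩
  · intro u _
    rw [Matrix.vecMul_vecMul, PM_mul, Matrix.vecMul_one]
  · intro u _
    rw [Matrix.vecMul_vecMul, PM_mul', Matrix.vecMul_one]

def encL : (Fin n → ZMod 2) →ₗ[ZMod 2] (Fin m → ZMod 2) where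
  toFun u := fun i => Sum.elim u (Matrix.vecMul u PM) (ee.symm i)
  map_add' u v := by
    funext i
    simp only [Pi.add_apply, Matrix.add_vecMul]
    cases ee.symm i <;> simp
  map_smul' r u := by
    funext i
    simp only [Pi.smul_apply, Matrix.smul_vecMul, RingHom.id_apply]
    cases ee.symm i <;> simp

theorem encL_inl (u) (i : Fin n) : encL PM ee u (ee (Sum.inl i)) = u i := by simp [encL]
theorem encL_inr (u) (i : Fin n) : encL PM ee u (ee (Sum.inr i)) = Matrix.vecMul u PM i := by
  simp [encL]

theorem encL_inj : Function.Injective (encL PM ee) := by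
  intro u v h
  funext i
  rw [← encL_inl PM ee u i, h, encL_inl]

theorem hammingNorm_encL (u) :
    hammingNorm (encL PM ee u) = hammingNorm u + hammingNorm (Matrix.vecMul u PM) := by
  simp only [hammingNorm, Finset.card_filter]
  rw [← Equiv.sum_comp ee, Fintype.sum_sum_type]
  simp only [encL_inl, encL_inr]

theorem selfDual (PM_mul : PM * PM.transpose = 1) (PM_mul' : PM.transpose * PM = 1) :
    LinearMap.range (encL PM ee) = dualCode (LinearMap.range (encL PM ee)) := by
  have key : ∀ (x : Fin m → ZMod 2) (u : Fin n → ZMod 2), ∑ i, x i * encL PM ee u i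
      = ((fun i => x (ee (Sum.inl i))) + PM.mulVec (fun i => x (ee (Sum.inr i)))) ⬝ᵥ u := by
    intro x u
    rw [← Equiv.sum_comp ee, Fintype.sum_sum_type]
    simp only [encL_inl, encL_inr]
    rw [add_dotProduct, dotProduct_comm (PM.mulVec _) u, Matrix.dotProduct_mulVec]
    congr 1
    rw [dotProduct_comm]; rfl
  ext x
  constructor
  · rintro ⟨a, rfl⟩ c ⟨u, rfl⟩
    rw [key]
    simp only [encL_inl, encL_inr]
    have : PM.mulVec (Matrix.vecMul a PM) = a := by
      rw [← Matrix.vecMul_transpose, Matrix.vecMul_vecMul, PM_mul, Matrix.vecMul_one]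
    change (a + PM.mulVec (Matrix.vecMul a PM)) ⬝ᵥ u = 0
    have h2 : a + a = 0 := by funext i; exact CharTwo.add_self_eq_zero (a i)
    rw [this, h2, zero_dotProduct]
  · intro hx
    have h0 : ∀ u, ((fun i => x (ee (Sum.inl i))) + PM.mulVec (fun i => x (ee (Sum.inr i)))) ⬝ᵥ u
        = 0 := by
      intro u
      rw [← key]
      exact hx _ ⟨u, rfl⟩
    have h1 := dotProduct_eq_zero _ h0
    have h2 : (fun i => x (ee (Sum.inl i))) = PM.mulVec (fun i => x (ee (Sum.inr i))) :=
      funext fun i => CharTwo.add_eq_zero.1 (congrFun h1 i)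
    refine ⟨fun i => x (ee (Sum.inl i)), ?_⟩
    funext i
    obtain ⟨i, rfl⟩ := ee.surjective i
    cases i with
    | inl i => rw [encL_inl]
    | inr i =>
      rw [encL_inr, h2, ← Matrix.vecMul_transpose, Matrix.vecMul_vecMul, PM_mul', Matrix.vecMul_one]

theorem ncard_eq (w : ℕ) : {v | v ∈ LinearMap.range (encL PM ee) ∧ hammingNorm v = w}.ncard
    = ∑ k ∈ Finset.range (w + 1), cnt PM k (w - k) := by
  have h1 : {v | v ∈ LinearMap.range (encL PM ee) ∧ hammingNorm v = w}
      = encL PM ee '' (↑(Finset.univ.filter (fun u : Fin n → ZMod 2 =>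
        hammingNorm u + hammingNorm (Matrix.vecMul u PM) = w)) : Set _) := by
    ext v
    constructor
    · rintro ⟨⟨u, rfl⟩, h⟩
      exact ⟨u, by simpa [hammingNorm_encL] using h, rfl⟩
    · rintro ⟨u, h, rfl⟩
      exact ⟨⟨u, rfl⟩, by simpa [hammingNorm_encL] using h⟩
  rw [h1, Set.ncard_image_of_injective _ (encL_inj PM ee), Set.ncard_coe_finset]
  rw [Finset.card_eq_sum_card_fiberwise (f := fun u => hammingNorm u)
    (t := Finset.range (w + 1))]
  · apply Finset.sum_congr rfl
    intro k hk
    have := Finset.mem_range.1 hk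
    unfold cnt
    rw [Finset.filter_filter]
    congr 1
    apply Finset.filter_congr
    intro u _
    constructor
    · rintro ⟨a, b⟩; exact ⟨b, by omega⟩
    · rintro ⟨a, b⟩; exact ⟨by omega, a⟩
  · intro u hu
    simp only [Finset.coe_filter, Finset.mem_univ, true_and, Set.mem_ofPred_eq] at hu
    simp only [Finset.coe_range, Set.mem_Iio]
    omega

end code

/-! ### The concrete matrix -/

def PM68 : Matrix (Fin 34) (Fin 34) (ZMod 2) := mat 34 colsP

theorem PM_transpose : mat 34 rowsP = PM68.transpose := by
  have : ∀ i j : Fin 34, (rowsP.getD j 0).testBit i = (colsP.getD i 0).testBit j := by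
    decide +kernel
  ext i j
  simp only [mat, PM68, Matrix.transpose_apply, this i j]

theorem mul_transpose_aux {n : ℕ} (cs : List ℕ) (hcs : cs.length = n)
    (h : ∀ i j : Fin n, (cs.countP fun c => c.testBit i && c.testBit j) % 2
      = if i = j then 1 else 0) :
    mat n cs * (mat n cs).transpose = 1 := by
  ext i j
  rw [Matrix.mul_apply, Matrix.one_apply]
  have e : ∑ k, mat n cs i k * (mat n cs).transpose k j
      = ((cs.countP fun c => c.testBit i && c.testBit j : ℕ) : ZMod 2) := by
    rw [countP_getD cs n hcs, Finset.card_filter]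
    push_cast
    apply Finset.sum_congr rfl
    intro k _
    simp only [mat, Matrix.transpose_apply]
    cases (cs.getD k 0).testBit i <;> cases (cs.getD k 0).testBit j <;> simp
  rw [e, ← ZMod.natCast_mod, h i j]
  split_ifs <;> simp

theorem length_colsP : colsP.length = 34 := by decide
theorem length_rowsP : rowsP.length = 34 := by decide

theorem PM_mul : PM68 * PM68.transpose = 1 := by
  refine mul_transpose_aux colsP length_colsP ?_
  decide +kernel

theorem mul_comm_aux {n : ℕ} (M : Matrix (Fin n) (Fin n) (ZMod 2)) (h : M * M.transpose = 1) :
    M.transpose * M = 1 := mul_eq_one_comm.1 h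

theorem PM_mul' : PM68.transpose * PM68 = 1 := mul_comm_aux PM68 PM_mul

def enc68 : (Fin 34 → ZMod 2) →ₗ[ZMod 2] (Fin 68 → ZMod 2) :=
  encL PM68 (finSumFinEquiv (m := 34) (n := 34))

/-- Number of codewords of weight `k` on the left half and `l` on the right half. -/
def cc (k l : ℕ) : ℕ := cnt PM68 k l

theorem cc_eq (k l : ℕ) : cc k l = NN 34 colsP k l := cnt_eq 34 colsP length_colsP k l

theorem cc_eq' (k l : ℕ) : cc k l = NN 34 rowsP l k := by
  rw [← cnt_eq 34 rowsP length_rowsP, PM_transpose]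
  exact cnt_swap PM68 PM_mul PM_mul' k l

theorem cntP {k : ℕ} {ls rs : List ℕ} (h : counts k colsP ls = rs) (hk : k ≤ 7)
    (hls : ∀ l ∈ ls, l < 64) : ls.map (cc k) = rs := by
  rw [← h, counts_NN k hk _ length_colsP _ hls]
  apply List.map_congr_left
  intro l _
  exact cc_eq k l

theorem cntQ {k : ℕ} {ls rs : List ℕ} (h : counts k rowsP ls = rs) (hk : k ≤ 7)
    (hls : ∀ l ∈ ls, l < 64) : ls.map (fun l => cc l k) = rs := by
  rw [← h, counts_NN k hk _ length_rowsP _ hls]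
  apply List.map_congr_left
  intro l _
  exact cc_eq' l k

/-! ### Kernel computations -/

theorem hP0 : counts 0 colsP [0, 1, 2, 3, 4, 5, 6, 7, 8, 9, 10, 11, 12, 14] =
    [1, 0, 0, 0, 0, 0, 0, 0, 0, 0, 0, 0, 0, 0] := by decide +kernel
theorem hP1 : counts 1 colsP [0, 1, 2, 3, 4, 5, 6, 7, 8, 9, 10, 11, 13] =
    [0, 0, 0, 0, 0, 0, 0, 0, 0, 0, 0, 1, 2] := by decide +kernel
theorem hP2 : counts 2 colsP [0, 1, 2, 3, 4, 5, 6, 7, 8, 9, 10, 12] =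
    [0, 0, 0, 0, 0, 0, 0, 0, 0, 0, 9, 41] := by decide +kernel
theorem hP3 : counts 3 colsP [0, 1, 2, 3, 4, 5, 6, 7, 8, 9, 11] =
    [0, 0, 0, 0, 0, 0, 0, 0, 0, 42, 170] := by decide +kernel
theorem hP4 : counts 4 colsP [0, 1, 2, 3, 4, 5, 6, 7, 8, 10] =
    [0, 0, 0, 0, 0, 0, 0, 0, 151, 479] := by decide +kernel
theorem hP5 : counts 5 colsP [0, 1, 2, 3, 4, 5, 6, 7, 9] =
    [0, 0, 0, 0, 0, 0, 0, 306, 1186] := by decide +kernel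
theorem hP6 : counts 6 colsP [6, 8] = [650, 1875] := by decide +kernel
theorem hP7 : counts 7 colsP [7] = [1992] := by decide +kernel
theorem hQ0 : counts 0 rowsP [0, 1, 2, 3, 4, 5, 6, 7, 8, 9, 10, 11, 12, 14] =
    [1, 0, 0, 0, 0, 0, 0, 0, 0, 0, 0, 0, 0, 0] := by decide +kernel
theorem hQ1 : counts 1 rowsP [0, 1, 2, 3, 4, 5, 6, 7, 8, 9, 10, 11, 13] =
    [0, 0, 0, 0, 0, 0, 0, 0, 0, 0, 0, 1, 0] := by decide +kernel
theorem hQ2 : counts 2 rowsP [0, 1, 2, 3, 4, 5, 6, 7, 8, 9, 10, 12] =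
    [0, 0, 0, 0, 0, 0, 0, 0, 0, 0, 8, 9] := by decide +kernel
theorem hQ3 : counts 3 rowsP [0, 1, 2, 3, 4, 5, 6, 7, 8, 9, 11] =
    [0, 0, 0, 0, 0, 0, 0, 0, 0, 51, 78] := by decide +kernel
theorem hQ4 : counts 4 rowsP [0, 1, 2, 3, 4, 5, 6, 7, 8, 10] =
    [0, 0, 0, 0, 0, 0, 0, 0, 184, 246] := by decide +kernel
theorem hQ5 : counts 5 rowsP [0, 1, 2, 3, 4, 5, 6, 7, 9] =
    [0, 0, 0, 0, 0, 0, 0, 307, 724] := by decide +kernel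
theorem hQ6 : counts 6 rowsP [8] = [1526] := by decide +kernel

theorem low_P_aux (c : ℕ → ℕ → ℕ)
    (hP1 : [0, 1, 2, 3, 4, 5, 6, 7, 8, 9, 10, 11, 13].map (c 1) =
      [0, 0, 0, 0, 0, 0, 0, 0, 0, 0, 0, 1, 2])
    (hP2 : [0, 1, 2, 3, 4, 5, 6, 7, 8, 9, 10, 12].map (c 2) =
      [0, 0, 0, 0, 0, 0, 0, 0, 0, 0, 9, 41])
    (hP3 : [0, 1, 2, 3, 4, 5, 6, 7, 8, 9, 11].map (c 3) =
      [0, 0, 0, 0, 0, 0, 0, 0, 0, 42, 170])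
    (hP4 : [0, 1, 2, 3, 4, 5, 6, 7, 8, 10].map (c 4) =
      [0, 0, 0, 0, 0, 0, 0, 0, 151, 479])
    (hP5 : [0, 1, 2, 3, 4, 5, 6, 7, 9].map (c 5) =
      [0, 0, 0, 0, 0, 0, 0, 306, 1186])
    (k l : ℕ) (h0 : 0 < k) (hk : k ≤ 5) (hl : k + l < 12) : c k l = 0 := by
  simp only [List.map_cons, List.map_nil, List.cons.injEq] at hP1 hP2 hP3 hP4 hP5
  have hl' : l ≤ 10 := by omega
  interval_cases k <;> interval_cases l <;> omega

theorem low_Q_aux (c : ℕ → ℕ → ℕ)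
    (hQ0 : [0, 1, 2, 3, 4, 5, 6, 7, 8, 9, 10, 11, 12, 14].map (fun l => c l 0) =
      [1, 0, 0, 0, 0, 0, 0, 0, 0, 0, 0, 0, 0, 0])
    (hQ1 : [0, 1, 2, 3, 4, 5, 6, 7, 8, 9, 10, 11, 13].map (fun l => c l 1) =
      [0, 0, 0, 0, 0, 0, 0, 0, 0, 0, 0, 1, 0])
    (hQ2 : [0, 1, 2, 3, 4, 5, 6, 7, 8, 9, 10, 12].map (fun l => c l 2) =
      [0, 0, 0, 0, 0, 0, 0, 0, 0, 0, 8, 9])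
    (hQ3 : [0, 1, 2, 3, 4, 5, 6, 7, 8, 9, 11].map (fun l => c l 3) =
      [0, 0, 0, 0, 0, 0, 0, 0, 0, 51, 78])
    (hQ4 : [0, 1, 2, 3, 4, 5, 6, 7, 8, 10].map (fun l => c l 4) =
      [0, 0, 0, 0, 0, 0, 0, 0, 184, 246])
    (hQ5 : [0, 1, 2, 3, 4, 5, 6, 7, 9].map (fun l => c l 5) =
      [0, 0, 0, 0, 0, 0, 0, 307, 724])
    (k l : ℕ) (h0 : 0 < k) (hk : l ≤ 5) (hl : k + l < 12) : c k l = 0 := by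
  simp only [List.map_cons, List.map_nil, List.cons.injEq] at hQ0 hQ1 hQ2 hQ3 hQ4 hQ5
  have hl' : k ≤ 11 := by omega
  interval_cases l <;> interval_cases k <;> omega

theorem sum12_aux (c : ℕ → ℕ → ℕ)
    (hP0 : [0, 1, 2, 3, 4, 5, 6, 7, 8, 9, 10, 11, 12, 14].map (c 0) =
      [1, 0, 0, 0, 0, 0, 0, 0, 0, 0, 0, 0, 0, 0])
    (hP1 : [0, 1, 2, 3, 4, 5, 6, 7, 8, 9, 10, 11, 13].map (c 1) =
      [0, 0, 0, 0, 0, 0, 0, 0, 0, 0, 0, 1, 2])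
    (hP2 : [0, 1, 2, 3, 4, 5, 6, 7, 8, 9, 10, 12].map (c 2) =
      [0, 0, 0, 0, 0, 0, 0, 0, 0, 0, 9, 41])
    (hP3 : [0, 1, 2, 3, 4, 5, 6, 7, 8, 9, 11].map (c 3) =
      [0, 0, 0, 0, 0, 0, 0, 0, 0, 42, 170])
    (hP4 : [0, 1, 2, 3, 4, 5, 6, 7, 8, 10].map (c 4) =
      [0, 0, 0, 0, 0, 0, 0, 0, 151, 479])
    (hP5 : [0, 1, 2, 3, 4, 5, 6, 7, 9].map (c 5) =
      [0, 0, 0, 0, 0, 0, 0, 306, 1186])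
    (hP6 : [6, 8].map (c 6) =
      [650, 1875])
    (hQ0 : [0, 1, 2, 3, 4, 5, 6, 7, 8, 9, 10, 11, 12, 14].map (fun l => c l 0) =
      [1, 0, 0, 0, 0, 0, 0, 0, 0, 0, 0, 0, 0, 0])
    (hQ1 : [0, 1, 2, 3, 4, 5, 6, 7, 8, 9, 10, 11, 13].map (fun l => c l 1) =
      [0, 0, 0, 0, 0, 0, 0, 0, 0, 0, 0, 1, 0])
    (hQ2 : [0, 1, 2, 3, 4, 5, 6, 7, 8, 9, 10, 12].map (fun l => c l 2) =
      [0, 0, 0, 0, 0, 0, 0, 0, 0, 0, 8, 9])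
    (hQ3 : [0, 1, 2, 3, 4, 5, 6, 7, 8, 9, 11].map (fun l => c l 3) =
      [0, 0, 0, 0, 0, 0, 0, 0, 0, 51, 78])
    (hQ4 : [0, 1, 2, 3, 4, 5, 6, 7, 8, 10].map (fun l => c l 4) =
      [0, 0, 0, 0, 0, 0, 0, 0, 184, 246])
    (hQ5 : [0, 1, 2, 3, 4, 5, 6, 7, 9].map (fun l => c l 5) =
      [0, 0, 0, 0, 0, 0, 0, 307, 724]) :
    ∑ k ∈ Finset.range (12 + 1), c k (12 - k) = 1710 := by
  simp only [List.map_cons, List.map_nil, List.cons.injEq] at hP0 hP1 hP2 hP3 hP4 hP5 hP6 hQ0 hQ1 hQ2 hQ3 hQ4 hQ5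
  simp only [Finset.sum_range_succ, Finset.sum_range_zero, Nat.reduceSub, *]

theorem sum14_aux (c : ℕ → ℕ → ℕ)
    (hP0 : [0, 1, 2, 3, 4, 5, 6, 7, 8, 9, 10, 11, 12, 14].map (c 0) =
      [1, 0, 0, 0, 0, 0, 0, 0, 0, 0, 0, 0, 0, 0])
    (hP1 : [0, 1, 2, 3, 4, 5, 6, 7, 8, 9, 10, 11, 13].map (c 1) =
      [0, 0, 0, 0, 0, 0, 0, 0, 0, 0, 0, 1, 2])
    (hP2 : [0, 1, 2, 3, 4, 5, 6, 7, 8, 9, 10, 12].map (c 2) =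
      [0, 0, 0, 0, 0, 0, 0, 0, 0, 0, 9, 41])
    (hP3 : [0, 1, 2, 3, 4, 5, 6, 7, 8, 9, 11].map (c 3) =
      [0, 0, 0, 0, 0, 0, 0, 0, 0, 42, 170])
    (hP4 : [0, 1, 2, 3, 4, 5, 6, 7, 8, 10].map (c 4) =
      [0, 0, 0, 0, 0, 0, 0, 0, 151, 479])
    (hP5 : [0, 1, 2, 3, 4, 5, 6, 7, 9].map (c 5) =
      [0, 0, 0, 0, 0, 0, 0, 306, 1186])
    (hP6 : [6, 8].map (c 6) =
      [650, 1875])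
    (hP7 : [7].map (c 7) =
      [1992])
    (hQ0 : [0, 1, 2, 3, 4, 5, 6, 7, 8, 9, 10, 11, 12, 14].map (fun l => c l 0) =
      [1, 0, 0, 0, 0, 0, 0, 0, 0, 0, 0, 0, 0, 0])
    (hQ1 : [0, 1, 2, 3, 4, 5, 6, 7, 8, 9, 10, 11, 13].map (fun l => c l 1) =
      [0, 0, 0, 0, 0, 0, 0, 0, 0, 0, 0, 1, 0])
    (hQ2 : [0, 1, 2, 3, 4, 5, 6, 7, 8, 9, 10, 12].map (fun l => c l 2) =
      [0, 0, 0, 0, 0, 0, 0, 0, 0, 0, 8, 9])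
    (hQ3 : [0, 1, 2, 3, 4, 5, 6, 7, 8, 9, 11].map (fun l => c l 3) =
      [0, 0, 0, 0, 0, 0, 0, 0, 0, 51, 78])
    (hQ4 : [0, 1, 2, 3, 4, 5, 6, 7, 8, 10].map (fun l => c l 4) =
      [0, 0, 0, 0, 0, 0, 0, 0, 184, 246])
    (hQ5 : [0, 1, 2, 3, 4, 5, 6, 7, 9].map (fun l => c l 5) =
      [0, 0, 0, 0, 0, 0, 0, 307, 724])
    (hQ6 : [8].map (fun l => c l 6) =
      [1526]) :
    ∑ k ∈ Finset.range (14 + 1), c k (14 - k) = 8328 := by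
  simp only [List.map_cons, List.map_nil, List.cons.injEq] at hP0 hP1 hP2 hP3 hP4 hP5 hP6 hP7 hQ0 hQ1 hQ2 hQ3 hQ4 hQ5 hQ6
  simp only [Finset.sum_range_succ, Finset.sum_range_zero, Nat.reduceSub, *]

theorem low_P (k l : ℕ) (h0 : 0 < k) (hk : k ≤ 5) (hl : k + l < 12) : cc k l = 0 :=
  low_P_aux cc
    (cntP hP1 (by norm_num) (by decide))
    (cntP hP2 (by norm_num) (by decide))
    (cntP hP3 (by norm_num) (by decide))
    (cntP hP4 (by norm_num) (by decide))
    (cntP hP5 (by norm_num) (by decide))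
    k l h0 hk hl

theorem low_Q (k l : ℕ) (h0 : 0 < k) (hk : l ≤ 5) (hl : k + l < 12) : cc k l = 0 :=
  low_Q_aux cc
    (cntQ hQ0 (by norm_num) (by decide))
    (cntQ hQ1 (by norm_num) (by decide))
    (cntQ hQ2 (by norm_num) (by decide))
    (cntQ hQ3 (by norm_num) (by decide))
    (cntQ hQ4 (by norm_num) (by decide))
    (cntQ hQ5 (by norm_num) (by decide))
    k l h0 hk hl

theorem total12 : {v | v ∈ LinearMap.range enc68 ∧ hammingNorm v = 12}.ncard = 1710 :=
  (ncard_eq PM68 (finSumFinEquiv (m := 34) (n := 34)) 12).trans (sum12_aux cc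
    (cntP hP0 (by norm_num) (by decide))
    (cntP hP1 (by norm_num) (by decide))
    (cntP hP2 (by norm_num) (by decide))
    (cntP hP3 (by norm_num) (by decide))
    (cntP hP4 (by norm_num) (by decide))
    (cntP hP5 (by norm_num) (by decide))
    (cntP hP6 (by norm_num) (by decide))
    (cntQ hQ0 (by norm_num) (by decide))
    (cntQ hQ1 (by norm_num) (by decide))
    (cntQ hQ2 (by norm_num) (by decide))
    (cntQ hQ3 (by norm_num) (by decide))
    (cntQ hQ4 (by norm_num) (by decide))
    (cntQ hQ5 (by norm_num) (by decide)))

theorem total14 : {v | v ∈ LinearMap.range enc68 ∧ hammingNorm v = 14}.ncard = 8328 :=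
  (ncard_eq PM68 (finSumFinEquiv (m := 34) (n := 34)) 14).trans (sum14_aux cc
    (cntP hP0 (by norm_num) (by decide))
    (cntP hP1 (by norm_num) (by decide))
    (cntP hP2 (by norm_num) (by decide))
    (cntP hP3 (by norm_num) (by decide))
    (cntP hP4 (by norm_num) (by decide))
    (cntP hP5 (by norm_num) (by decide))
    (cntP hP6 (by norm_num) (by decide))
    (cntP hP7 (by norm_num) (by decide))
    (cntQ hQ0 (by norm_num) (by decide))
    (cntQ hQ1 (by norm_num) (by decide))
    (cntQ hQ2 (by norm_num) (by decide))
    (cntQ hQ3 (by norm_num) (by decide))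
    (cntQ hQ4 (by norm_num) (by decide))
    (cntQ hQ5 (by norm_num) (by decide))
    (cntQ hQ6 (by norm_num) (by decide)))

theorem selfDual68 : IsSelfDual (LinearMap.range enc68) :=
  selfDual PM68 (finSumFinEquiv (m := 34) (n := 34)) PM_mul PM_mul'

theorem cnt_pos {n : ℕ} (M : Matrix (Fin n) (Fin n) (ZMod 2)) (u : Fin n → ZMod 2) :
    cnt M (hammingNorm u) (hammingNorm (Matrix.vecMul u M)) ≠ 0 := by
  unfold cnt
  rw [Finset.card_ne_zero]
  exact ⟨u, by simp⟩

theorem min_weight (v : Fin 68 → ZMod 2) (hv : v ∈ LinearMap.range enc68) (h0 : v ≠ 0) :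
    12 ≤ hammingNorm v := by
  obtain ⟨u, rfl⟩ := hv
  by_contra! hlt
  have e : hammingNorm (enc68 u) = _ :=
    hammingNorm_encL PM68 (finSumFinEquiv (m := 34) (n := 34)) u
  rw [e] at hlt
  have hu : u ≠ 0 := by rintro rfl; exact h0 (map_zero _)
  have hpos : 0 < hammingNorm u := hammingNorm_pos_iff.2 hu
  refine cnt_pos PM68 u ?_
  rcases Nat.lt_or_ge 5 (hammingNorm u) with h | h
  · exact low_Q _ _ hpos (by omega) hlt
  · exact low_P _ _ hpos h hlt

end SD68

/-- There exists a binary self-dual `[68, 34, 12]` code with weight enumerator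
`W_{68,1}` ( β = 317): minimum nonzero weight 12, exactly 1710 codewords of weight 12
and exactly 8328 codewords of weight 14. -/
theorem exists_selfDual_68_13 :
    ∃ C : Submodule (ZMod 2) (Fin 68 → ZMod 2),
      IsSelfDual C ∧
      (∀ v ∈ C, v ≠ 0 → 12 ≤ hammingNorm v) ∧
      (∃ v ∈ C, hammingNorm v = 12) ∧
      {v | v ∈ C ∧ hammingNorm v = 12}.ncard = 1710 ∧
      {v | v ∈ C ∧ hammingNorm v = 14}.ncard = 8328 := by
  refine ⟨LinearMap.range SD68.enc68, SD68.selfDual68, SD68.min_weight, ?_, SD68.total12, SD68.total14⟩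
  have h : {v | v ∈ LinearMap.range SD68.enc68 ∧ hammingNorm v = 12}.Nonempty := by
    apply Set.nonempty_of_ncard_ne_zero
    rw [SD68.total12]; norm_num
  obtain ⟨v, hv⟩ := h
  exact ⟨v, hv.1, hv.2⟩
end

section
/- There exists a binary self-dual code of length 68 and minimum (nonzero) weight 12 that has exactly 686 codewords of weight 12 and exactly 13960 codewords of weight 14 (i.e. a self-dual [68,34,12] code with weight enumerator W_{68,2} with γ = 2 and β = 61). -/
def rowsL : List ℕ :=
  [26188735782975740572913384506761851865023337303503759676871227554477064051415662016794411693298635778534506237978494296260360983094031108148141545581596,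
   26188723295987540089452243521438203371263413684475090809966940536925565203857245822256494876390723966044056020681095058324284400247806655266521339433185,
   204587010548151064272936246795014984000121790871591148247858373859861074216928607201345492556568361173017965644578828717705137895876781051312019681018,
   26187124863175089225796516956300011453046680590589580943596263944441332091759377922370856737349198220038410309720426218335591644334781269946260357825259,
   26391724361479633713839014629712357808403442674679718413223773944654851248397974780029304667389449652927535322919318357418934911577885919553813051929111,
   204599497548306591071119436158528212965438546409899721849977436176566698225183058736478109968347775327133756901735999502796843640193498464909021733662,
   26188723199189042390294976597192356241450767865247794512137042675638692550515669954516931538419818816293184870223371305538371641048224782055740812250408,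
   26393310208975047815239961674121299172523989029493646240251151741232598496982866401956600957249910374626458165472777908454362553850878994760021132878584,
   26393310111426406398350808959565531544670324730153453361928431838253524333334974945489859279036864487690491698764416755585726646434558384507809656259020,
   26187137447717978784890917139556452745813852400899955561355477224760229343420494064983864416482087749796651310765464142197195533764527033946546298932650,
   1598336025908213536630611696175687820892268071034290882821321421887451916718621557139369374970569470045036840991463427240403615254310801674880160451,
   26187124863931327483392407643608754613939823312042311247307125865312064068243882937019522739699195914472424970237424849680484971483912763982247543896756,
   204599399993664759932928711104612568392051128666834385150830779487886250183512329689738090038713850870719171382276626891364713330783252252170848285455,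
   1610822257963835360573923494426568208275988246214333622744134892470879957131854697743454893022663007648607995794133646802337166852474267443329295724,
   26393310208975094696337678740765734599857215918075924466083440122110473813647899675223028778730846982055372345350464523634057927798975839170789331563519,
   26188723198426896748150167674375578983611170008990368467501098944170029979581040088495283581185788370248134284795830589850874896624790734966895032976609,
   26188735782975740212311056122027138012015307570908484500350095296149390969071353326366985930344926676814887900377193639416322602000656787153635156613274,
   26391724263156845454369629604947519691031383991166796440617387500215916306526390826681462605443456818497375957171763306630601611836335688599937997281132,
   1610823014155575278282983652798213967637136763769575894751595523078565408818560471167877929369219656401255856794581791982088196599492878862040685637,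
   26187124961491877062476694707890371549541354755288828364757771088632200899993813937383305148061676799000523822475723663788043717100114661313693094711991,
   206197832800114479683692641952130079067967342396491848501307324300087635750891071276859227101463048412788183113427650542717104904867305215842871975611,
   206185249013462817605206713570209534508538374260042082257198867266766322624246171408725404331114176993956619324550232474552792990526450093897560363614,
   26393322696731441602451586492322217565754507493651900986351978673464544419469367196934475832348505977593644363717159657762648360285631767514329598524524,
   26393322696737395862463811746070063763812281864290049508290456035575656729603638148249787152849718707981554512046748320548222689092422686513832730401762,
   26393310209743194237914736495391690194059667704923930433744670442144294842132054435808126256868309217772299594720486345583761699171267509738274037121807,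
   204599497542352691661050618555246902822044384336500681720650185207918945343037293149554315926343429781813034600825402147627868404831340151414723451826,
   1610823020063323246563377541162960209842314690026596499870544252343518983917124605802405349841616735088816203096761447092258750987231047013568199930,
   26187137448480170581294545552049796275791076520197857808953090370090371017837229518740051928566227783874512980213296685877202588399913389376410924713688,
   1598432812450503097935530631672920408604305355922796735861320520550811566560662152674741572174641451983338005051536330588265575699165525499190162142,
   26393310112188552037700940143636209499490930684585426828721778647135662715497678176246584455511813013758865385578153757814507862894388657429876821033794,
   206197735251426184535860649226933800187750412884829843651731835517093566495860189151449548188867525382120488030924059221179109438671192427214128118903,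
   1610823020062959849209295435447215659921559492734587553120893393681046186947587352108272775487257324567078929841152491863531802002962123485087092730,
   26187137350925482232522363966443269456357058415535337108618281427916484504746550644376370287143170914004662828167786352743378005736539469415660553132543,
   26391724263156845457208844725487221150115641316710385404929542831968202065976016223746675644230775740291143461910716490622738605564118749378814987552696]

def rowsR : List ℕ :=
  [7589013556883256484521419383003335230230126439621139113553107209036867224473490458,
   971334912928216407852923421557068132653177468165756986452572414356283160112731346492,
   124330809565643288766583391006050990752616152073946805972533249053751658734564041193777,
   15914343624865509099955076789118914149752558000776131643490221587394050774864633397474285,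
   2037035976394238451088981570528272215815662025827259282794593973156915511218861242188384437,
   260740604970873971407179845081959318059153142483639406558417818664304973970385034029584542414,
   33374797436264220504237566044771588412749343827125464522835378022221562034453096997257906414990,
   4271974071841820224542379963321949894000404225038937529550730020521744351943730024982978603110286,
   546812681195752981152877893549505048234490261430501865692465347851993440693649547315188750927164256,
   69992023193056381579979360436178773049975956627705841389819767330777181903128254696798763864334949564,
   8958978968711216842229828411470238973666509739179068518551000559015250860458653196610133343503522374213,
   1146749307995035755805410448117858599689355996629240802423057960963735416288314570532731789062110696507973,
   146783911423364576743092537299796760839208003264405749578515282089825238512100108198736532669901012977277970,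
   18788340662190665823115844774314696247276738969619697940813991632695518621315063691854676051029422763904366773,
   2404907604760405225358828131112340868397517726941549794636952375227179403982519741076519384402639531030356552569,
   307828173409331868845930000782371982852185685645416271764881220763837216575723121857545320926710717495887508405178,
   39402006196394479212279040100143613864368935954907946286172184986556433305222322410197266588740160821152979423744581,
   5043456793138493339171717132818382567050669794978251874872201232807570333669193352185319192751977845194855939702725320,
   645562469521727147413979793000752968582426451854299075794170145714946463707766799003155803792711161442597587285017148699,
   82631996098781074868989413504096379978550585370535154149498482193187970309127853141610916383565325063473303445877016981191,
   10576895500643977583230644928524336637254474927895314858714816480692466096749369838924087878715426760202169402942948162990726,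
   1353842624082429130653522550851115089568572790770137105509836715906295961974473820639899073294682220020800223385758886060731768,
   173291855882550928723650886508942731464777317210988999116734504478191813767901388552420833166951198886047992358557550713318217231,
   22181357552966518876627313473144669627491496603006533068150918964168396489648423531331168126470921960390524587726511660873614158511,
   2839213766779714416208296124562517712318911565184836232726935909346336961731664946589630136684075615151760309178030152297596967810456,
   363419362147803445274661903944002267176820680343659030200493817636774907030356146302056475663993626684404440342017238357159536567409155,
   46517678354918840995156723704832290198633047083988355858015372747783509238921274714715665515196092585642671018141295801470149051172547858,
   5954262829429611647380060634218533145425030026750509549825967715334790245915957111826829333992803695172968111486925693466917280175251535162,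
   762145642166990290864647761179972242614403843424065222377723867562825102780193643052604090462859150310622329091822967889970887538964987382864,
   97554642197374757230674913431036447054643691958280348464348654988292866839856593018021421982002998989984517773630697498039768495944437801239223,
   12486994201263968925526388919172665222994392570659884603436627838561239320097872926013471432138867701926977324940701115209185458500914796754842161,
   1598335257761788022467377781654101148543282249044465229239888363328190333922714920629184746743534603644056843358186748807829056646052955001804154307,
   204586912993508866875824356051724947013540127877691549342705710506008421560870339595016818316670924259211987298354698088406973414797389937423793934772,
   26187124863169134960105517574620793217733136368344518315866330944769070430986114706390680654279839349464174959007612194158574811845642559343661849234395]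

def lowShadow : List ℕ :=
  [2053075629631698178599246408922214618433532154804471955640776043414954195093645407629082624,
   4305609609883055199046507987546119881400693955822060712679634786356436981034056836236341910962176,
   5082858799334887818383996172918526180914571943849115028649681434443662124406498802103216665132137970179275207422771200,
   1353925256117929917924786019476898226048695926435744324382372220220294066339756290352710743886567273702018939968724379124105216,
   174645698506633665682477818391662692484346672373741521620404229841054857921774820313516551802789108688617115316689118555516436480,
   22182721973136747278056612261572813056091373925035452612401905633894701154255759094562288474322069294718518947123756412572291563520,
   22354649491486109360925177721982197580185472281335156714473984475823051716655841752206563934090351918644378936143260011138234974208,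
   363419362147803445274661903945149086476838911192881996902239046782553198325379148360714849080112859572831403098460958660218116265476096,
   46517678354918840995156723723620639819802681618336957205664308031396987131737851466875946758690692559796739177917220718304336608051068928,
   46881097717066644445514246813165568956569266556070468019584578625548010206594182285530167513861594402684926406458799926246571741183737856,
   5954262851784261056229130439569498651827950380742539275453936500043259065212834666211599674316489282599609471547371422227845203160146640896,
   762145642166990290864652804636765529038403746500810539658238664754059182879820525720610503979242750520923929432449116485248168812767057281024,
   98316788202983291026895972985754950554733507648152846267593393931504771125913213773621385835189753326032773980087990721546471898105780019134464,
   12486994247781647280455806809869742739779717225849393675374831489479009216667179014991262335372330938330075474251089360046936232378846639409856512,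
   12486994247781647281809649433912462036063435965072571374387454607343570801014051227088254861737020403154169055789032433057335783617169747011960832,
   12487000155526798355138036304276756234666031334865900460836402051684195313108026983163599657518266557959099935371550189741116111291181412716118016,
   12487756346906135915817253566933845195237006974503308929399610533182802035662283391228906858510001013725162553188684757652158060068425539002564608,
   12487756346908975129594610176850697468944800137690964598073236528936330858392044112737791866068759376775660363079453491225445281015886725634850816,
   1598335257762151442002817440981926739170877137820584814761843811817462685192204649705007572369885532387450068800402134662032389309180423235734339584,
   1598335263716414271259137232479436444665759396806664099865834990711947076079914591985205131365268097526073183332573235008071787628231287237257461760,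
   1598335263762568530251908270674920378013359567223511041199095830953533857919020812327809731150672682848019820249491535977300408389082852015118221312,
   1598432812403985397224608456567532492818657086049707743290190004456303916606521229516136587363935005814668369135243167572583653507066094928921624576,
   204586912993508866875824356134356943112321202755639941815513307451119525870576019295154078354586874651195216785609027646374673706759117416022369370112,
   204586912993508866875824356134356943112321203902389249810549063133170499328426001942162166698485791135135557762399895809728522670870516730539867635712,
   204586912993509230295186503855170221677848979484719131388744882296150843885142495385087395630175401087902054404970035550505982207791555143395239264256,
   204586912999463129727435325335349085092688776512664646566018921448765373643242528536699031427961926861448967754011452402540263474824475400879338422272,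
   204586913755654509042814646916372708193512370492095392800147767355972783894866934024102810272122398161189189533633447077542904726086476052738198208512,
   206197735245471918867217260222943783604656305076052523095479789248129463392916148524789345752567648203524916553002591991885051413427486443420883353600,
   206197735245518802804148093646453068421211305374290196643224932696899383184941400523748127122512166784484131548865344216764596237262952641949960503296,
   206197832806068379071404102544591712497971992308423662763648009395656010097077793906087866019282310103641215812730660654563420546822355484727197040640,
   26187124863169134960105517574620798261192353202783280083474645707127524017256274763047287601857078740733857742333353314008133105951731243945008897720320,
   26187124863169134960127700286099015815137675410209203250113008389923418200524019384545759029960950918236550530587758840632549300987146976857347636330496,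
   26187124863169181477784045795894566426337370608161202689015146348603317154277941833553282836989239226536586608596273024060571792232674234304574858985472,
   26187124961485922799647439752435756543951387700026230263306212357732463152772250268825691875191765967688196418645935063610247872147187300617899957288960,
   26188723198432851010957414564049827379515898183738987811122321358596568094855700862033384013512833064293046082348506856702318254731257308264340555563008]

def shadL : ℕ :=
  26393310208975047815239961674121299172523989029493646240251149688407588329482527366367169179311672938792631987041978360759812719537453639095813565752039

def shadR : ℕ :=
  466787080593919322441197102298252175442002689384140424138895280687700139688143

def shadV : ℕ :=
  2053075629631698178599246408922214618433532154804471955640776043414954195093645407629082624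

/-- Check `P` on all combinations of at most `l` rows, shifted by `acc`. -/
noncomputable def scan (P : ℕ → Bool) (rs : List ℕ) : ℕ → ℕ → Bool :=
  List.rec (motive := fun _ => ℕ → ℕ → Bool) (fun _ acc => P acc)
    (fun r _ ih l acc =>
      Nat.rec (motive := fun _ => Bool) (P acc)
        (fun l' _ => Bool.rec false (ih l acc) (ih l' (Nat.xor acc r))) l) rs

def okCode (n : ℕ) : Bool := Bool.rec (Nat.beq (Nat.shiftRight n 34) 0) true
  (Nat.ble 12 (Nat.mod (Nat.shiftRight n 34) 127))

def okShadow (n : ℕ) : Bool :=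
  Bool.rec (lowShadow.any fun m => Nat.beq (Nat.shiftRight n 34) (Nat.shiftRight m 34)) true
    (Nat.ble 11 (Nat.mod (Nat.shiftRight n 34) 127))

/-! ### MacWilliams identity for cosets of self-dual codes -/

/-- The sign character of `ZMod 2`. -/
def sg (a : ZMod 2) : ℤ := if a = 0 then 1 else -1

lemma sg_add (a b : ZMod 2) : sg (a + b) = sg a * sg b := by
  revert a b; decide

lemma sg_sum {ι : Type*} (s : Finset ι) (f : ι → ZMod 2) :
    sg (∑ i ∈ s, f i) = ∏ i ∈ s, sg (f i) := by
  classical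
  induction s using Finset.induction_on with
  | empty => simp [sg]
  | insert a s ha ih => rw [Finset.sum_insert ha, Finset.prod_insert ha, sg_add, ih]

lemma pow_norm {ι : Type*} [Fintype ι] (z : ℤ) (v : ι → ZMod 2) :
    z ^ hammingNorm v = ∏ i, (if v i = 0 then 1 else z) := by
  classical
  rw [Finset.prod_ite]
  simp [hammingNorm]

lemma fourier_weight {ι : Type*} [Fintype ι] [DecidableEq ι] (z : ℤ) (u : ι → ZMod 2) :
    ∑ v : ι → ZMod 2, sg (∑ i, u i * v i) * z ^ hammingNorm v
      = (1 - z) ^ hammingNorm u * (1 + z) ^ (Fintype.card ι - hammingNorm u) := by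
  have h1 : ∀ v : ι → ZMod 2, sg (∑ i, u i * v i) * z ^ hammingNorm v
      = ∏ i, (sg (u i * v i) * (if v i = 0 then 1 else z)) := by
    intro v
    rw [sg_sum, pow_norm, Finset.prod_mul_distrib]
  simp_rw [h1]
  have h2 := Finset.prod_univ_sum (fun _ : ι => (Finset.univ : Finset (ZMod 2)))
    (fun i t => sg (u i * t) * (if t = 0 then 1 else z))
  rw [Fintype.piFinset_univ] at h2
  rw [← h2]
  have h3 : ∀ i, ∑ t : ZMod 2, sg (u i * t) * (if t = 0 then (1 : ℤ) else z)
      = if u i ≠ 0 then 1 - z else 1 + z := by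
    intro i
    have : (Finset.univ : Finset (ZMod 2)) = {0, 1} := by decide
    rw [this, Finset.sum_pair (by decide)]
    have hu : u i = 0 ∨ u i = 1 := by
      generalize u i = a
      revert a; decide
    rcases hu with hu | hu <;> simp [hu, sg]
    ring
  simp_rw [h3]
  rw [Finset.prod_ite]
  simp only [Finset.prod_const, hammingNorm]
  congr 2
  have := Finset.card_filter_add_card_filter_not (s := (Finset.univ : Finset ι)) (fun i => u i ≠ 0)
  rw [Finset.card_univ] at this
  omega

open Classical in
lemma char_sum {ι : Type*} [Fintype ι] [DecidableEq ι] (C : Submodule (ZMod 2) (ι → ZMod 2))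
    (hC : IsSelfDual C) (w : ι → ZMod 2) :
    ∑ u ∈ Finset.univ.filter (· ∈ C), sg (∑ i, u i * w i)
      = if w ∈ C then ((Finset.univ.filter (· ∈ C)).card : ℤ) else 0 := by
  have hmem : w ∈ C ↔ ∀ c ∈ C, ∑ i, w i * c i = 0 := by
    constructor
    · intro h; rw [hC] at h; exact h
    · intro h; rw [hC]; exact h
  split_ifs with h
  · rw [hmem] at h
    rw [Finset.sum_congr rfl (g := fun _ => (1 : ℤ))]
    · simp
    · intro u hu
      have := h u (by simpa using hu)
      simp_rw [mul_comm (u _)]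
      rw [this]; rfl
  · rw [hmem] at h
    push Not at h
    obtain ⟨c, hc, hne⟩ := h
    have hc1 : sg (∑ i, c i * w i) = -1 := by
      simp_rw [mul_comm (c _)]
      simp [sg, hne]
    set S := ∑ u ∈ Finset.univ.filter (· ∈ C), sg (∑ i, u i * w i) with hS
    have : S = -S := by
      conv_lhs => rw [hS]
      rw [hS, ← Finset.sum_neg_distrib]
      refine Finset.sum_bij' (fun u _ => u + c) (fun u _ => u - c) ?_ ?_ ?_ ?_ ?_
      · intro u hu; simp at hu ⊢; exact C.add_mem hu hc
      · intro u hu; simp at hu ⊢; exact C.sub_mem hu hc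
      · intro u _; simp
      · intro u _; simp
      · intro u _
        simp only [Pi.add_apply, add_mul, Finset.sum_add_distrib, sg_add, hc1]
        ring
    omega

open Classical in
lemma macWilliams {ι : Type*} [Fintype ι] [DecidableEq ι] (C : Submodule (ZMod 2) (ι → ZMod 2))
    (hC : IsSelfDual C) (s : ι → ZMod 2) (z : ℤ) :
    ((Finset.univ.filter (· ∈ C)).card : ℤ) *
        ∑ v ∈ Finset.univ.filter (fun v => v + s ∈ C), z ^ hammingNorm v
      = ∑ u ∈ Finset.univ.filter (· ∈ C), sg (∑ i, u i * s i) *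
          ((1 - z) ^ hammingNorm u * (1 + z) ^ (Fintype.card ι - hammingNorm u)) := by
  simp_rw [← fourier_weight, Finset.mul_sum]
  rw [Finset.sum_comm]
  rw [Finset.sum_filter]
  refine Finset.sum_congr rfl fun v _ => ?_
  have h := char_sum C hC (v + s)
  have h2 : ∀ u : ι → ZMod 2, sg (∑ i, u i * s i) * (sg (∑ i, u i * v i) * z ^ hammingNorm v)
      = sg (∑ i, u i * (v + s) i) * z ^ hammingNorm v := by
    intro u
    simp only [Pi.add_apply, mul_add, Finset.sum_add_distrib, sg_add]
    ring
  simp_rw [h2]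
  rw [← Finset.sum_mul, h]
  split_ifs <;> simp

/-! ### Words as natural numbers

A word of length 68 is stored in a natural number: digit `i` in base 128 of `n >>> 34` is the
coordinate `i`. (The 34 lowest bits of `n` are ignored.) The weight is then `(n >>> 34) % 127`. -/

/-- The binary word stored in `n`. -/
def dec (n : ℕ) : Fin 68 → ZMod 2 := fun i => if n.testBit (34 + 7 * i) then 1 else 0

lemma dec_xor (n m : ℕ) : dec (Nat.xor n m) = dec n + dec m := by
  funext i
  have : (Nat.xor n m).testBit (34 + 7 * i) =
      ((n.testBit (34 + 7 * i)) ^^ (m.testBit (34 + 7 * i))) := Nat.testBit_xor ..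
  simp only [dec, this, Pi.add_apply]
  cases n.testBit (34 + 7 * i) <;> cases m.testBit (34 + 7 * i) <;> decide

lemma dec_and (n m : ℕ) (i : Fin 68) : dec (n &&& m) i = dec n i * dec m i := by
  simp only [dec, Nat.testBit_and]
  cases n.testBit (34 + 7 * i) <;> cases m.testBit (34 + 7 * i) <;> decide

lemma dec_congr {n m : ℕ} (h : n >>> 34 = m >>> 34) : dec n = dec m := by
  funext i
  simp only [dec, ← Nat.testBit_shiftRight, h]

/-- All base 128 digits of `n` are 0 or 1, and there are at most `k` of them. -/
def good : ℕ → ℕ → Bool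
  | 0, n => n == 0
  | k + 1, n => Nat.ble (n % 128) 1 && good k (n / 128)

lemma good_and : ∀ (k n m : ℕ), good k n = true → good k m = true → good k (n &&& m) = true
  | 0, n, m, hn, hm => by
      simp only [good, beq_iff_eq] at *
      simp [hn]
  | k + 1, n, m, hn, hm => by
      simp only [good, Bool.and_eq_true, Nat.ble_eq] at *
      have h1 : (n &&& m) % 128 = (n % 128) &&& (m % 128) := Nat.and_mod_two_pow (n := 7)
      have h2 : (n &&& m) / 128 = (n / 128) &&& (m / 128) := Nat.and_div_two_pow (n := 7)
      rw [h1, h2]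
      exact ⟨le_trans Nat.and_le_left hn.1, good_and k _ _ hn.2 hm.2⟩

lemma good_xor : ∀ (k n m : ℕ), good k n = true → good k m = true → good k (n ^^^ m) = true
  | 0, n, m, hn, hm => by
      simp only [good, beq_iff_eq] at *
      simp [hn, hm]
  | k + 1, n, m, hn, hm => by
      simp only [good, Bool.and_eq_true, Nat.ble_eq] at *
      have h1 : (n ^^^ m) % 128 = (n % 128) ^^^ (m % 128) := Nat.xor_mod_two_pow (n := 7)
      have h2 : (n ^^^ m) / 128 = (n / 128) ^^^ (m / 128) := Nat.xor_div_two_pow (n := 7)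
      rw [h1, h2]
      refine ⟨?_, good_xor k _ _ hn.2 hm.2⟩
      obtain ⟨h3, -⟩ := hn
      obtain ⟨h4, -⟩ := hm
      generalize n % 128 = a at *
      generalize m % 128 = b at *
      interval_cases a <;> interval_cases b <;> decide

lemma good_weight : ∀ (k n : ℕ), good k n = true →
    n ≡ ∑ i ∈ Finset.range k, (if n.testBit (7 * i) then 1 else 0) [MOD 127]
  | 0, n, hn => by
      simp only [good, beq_iff_eq] at hn
      simp [hn, Nat.ModEq]
  | k + 1, n, hn => by
      simp only [good, Bool.and_eq_true, Nat.ble_eq] at hn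
      have ih := good_weight k (n / 128) hn.2
      rw [Finset.sum_range_succ']
      have h1 : ∀ i, n.testBit (7 * (i + 1)) = (n / 128).testBit (7 * i) := by
        intro i
        have := Nat.testBit_div_two_pow (n := 7) n (7 * i)
        rw [show (2 : ℕ) ^ 7 = 128 by norm_num] at this
        rw [this]; ring_nf
      simp_rw [h1]
      have h2 : (if n.testBit (7 * 0) then 1 else 0) = n % 128 := by
        rw [Nat.mul_zero, Nat.testBit_zero]
        have := hn.1
        have h3 : n % 2 = n % 128 % 2 := by omega
        rcases Nat.le_one_iff_eq_zero_or_eq_one.mp hn.1 with h | h <;> simp [h3, h]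
      rw [h2]
      have h3 : n = n / 128 * 128 + n % 128 := by omega
      conv_lhs => rw [h3]
      refine Nat.ModEq.add_right _ ?_
      have h4 : n / 128 * 128 ≡ n / 128 * 1 [MOD 127] := Nat.ModEq.mul_left _ (by decide)
      rw [mul_one] at h4
      exact h4.trans ih

/-- Coordinates of a word, indexed by natural numbers. -/
def co (v : Fin 68 → ZMod 2) (k : ℕ) : ZMod 2 := if h : k < 68 then v ⟨k, h⟩ else 0

lemma co_fin (v : Fin 68 → ZMod 2) (i : Fin 68) : co v i = v i := by simp [co]

lemma co_dec (n k : ℕ) (hk : k < 68) : co (dec n) k = if n.testBit (34 + 7 * k) then 1 else 0 := by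
  simp [co, hk, dec]

lemma norm_eq (v : Fin 68 → ZMod 2) :
    hammingNorm v = ∑ k ∈ Finset.range 68, if co v k ≠ 0 then 1 else 0 := by
  rw [← Fin.sum_univ_eq_sum_range (fun k => if co v k ≠ 0 then 1 else 0) 68]
  simp only [co_fin, hammingNorm, Finset.card_filter]

lemma norm_split (v : Fin 68 → ZMod 2) :
    hammingNorm v = (∑ k ∈ Finset.range 34, if co v k ≠ 0 then 1 else 0)
      + ∑ k ∈ Finset.range 34, if co v (34 + k) ≠ 0 then 1 else 0 := by
  rw [norm_eq, ← Finset.sum_range_add _ 34 34]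

lemma norm_dec (n : ℕ) (hn : good 68 (n >>> 34) = true) :
    hammingNorm (dec n) = (n >>> 34) % 127 := by
  have h := good_weight 68 _ hn
  have h1 : hammingNorm (dec n)
      = ∑ i ∈ Finset.range 68, (if (n >>> 34).testBit (7 * i) then 1 else 0) := by
    rw [norm_eq]
    refine Finset.sum_congr rfl fun k hk => ?_
    rw [co_dec n k (Finset.mem_range.mp hk), Nat.testBit_shiftRight]
    cases n.testBit (34 + 7 * k) <;> simp
  rw [← h1] at h
  have h2 : hammingNorm (dec n) ≤ 68 := by
    simpa using hammingNorm_le_card_fintype (x := dec n)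
  rw [h, Nat.mod_eq_of_lt (by omega)]

lemma sum_eq_norm (v : Fin 68 → ZMod 2) : ∑ i, v i = (hammingNorm v : ZMod 2) := by
  rw [hammingNorm, Finset.card_filter]
  push_cast
  refine Finset.sum_congr rfl fun i _ => ?_
  generalize v i = a
  revert a; decide

/-- parity of the inner product, on stored words -/
def dotN (n m : ℕ) : ℕ := ((n &&& m) >>> 34) % 127 % 2

lemma dot_dec (n m : ℕ) (hn : good 68 (n >>> 34) = true) (hm : good 68 (m >>> 34) = true) :
    ∑ i, dec n i * dec m i = (dotN n m : ZMod 2) := by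
  have hg : good 68 ((n &&& m) >>> 34) = true := by
    rw [Nat.shiftRight_and_distrib]; exact good_and _ _ _ hn hm
  simp_rw [← dec_and]
  rw [sum_eq_norm, norm_dec _ hg, dotN, ZMod.natCast_mod]

/-- Linear combination of stored words. -/
def lc : List ℕ → (ℕ → ZMod 2) → (Fin 68 → ZMod 2)
  | [], _ => 0
  | r :: rs, x => x 0 • dec r + lc rs (fun k => x (k + 1))

/-- Number of nonzero coefficients. -/
def cn : List ℕ → (ℕ → ZMod 2) → ℕ
  | [], _ => 0
  | _ :: rs, x => (if x 0 ≠ 0 then 1 else 0) + cn rs (fun k => x (k + 1))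

lemma cn_eq : ∀ (rs : List ℕ) (x : ℕ → ZMod 2),
    cn rs x = ∑ k ∈ Finset.range rs.length, if x k ≠ 0 then 1 else 0
  | [], x => by simp [cn]
  | r :: rs, x => by
      rw [cn, cn_eq rs, List.length_cons, Finset.sum_range_succ', add_comm]

lemma lc_eq : ∀ (rs : List ℕ) (x : ℕ → ZMod 2),
    lc rs x = ∑ k ∈ Finset.range rs.length, x k • dec (rs.getD k 0)
  | [], x => by simp [lc]
  | r :: rs, x => by
      rw [lc, lc_eq rs, List.length_cons, Finset.sum_range_succ', add_comm]
      simp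

lemma lc_zero : ∀ (rs : List ℕ) (x : ℕ → ZMod 2), cn rs x = 0 → lc rs x = 0
  | [], x, _ => rfl
  | r :: rs, x, h => by
      rw [cn] at h
      have h0 : x 0 = 0 := by
        by_contra h'
        simp [h'] at h
      rw [lc, lc_zero rs _ (by omega), h0]
      simp

lemma lc_mem (C : Submodule (ZMod 2) (Fin 68 → ZMod 2)) : ∀ (rs : List ℕ) (x : ℕ → ZMod 2),
    (∀ r ∈ rs, dec r ∈ C) → lc rs x ∈ C
  | [], x, _ => C.zero_mem
  | r :: rs, x, h => C.add_mem (C.smul_mem _ (h r (by simp)))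
      (lc_mem C rs _ fun r' hr' => h r' (by simp [hr']))

lemma scan_spec (P : ℕ → Bool) : ∀ (rs : List ℕ) (l acc : ℕ) (x : ℕ → ZMod 2),
    scan P rs l acc = true → cn rs x ≤ l →
    (∀ r ∈ rs, good 68 (r >>> 34) = true) → good 68 (acc >>> 34) = true →
    ∃ n, good 68 (n >>> 34) = true ∧ P n = true ∧ dec n = dec acc + lc rs x
  | [], l, acc, x, hs, _, _, hg => ⟨acc, hg, hs, by simp [lc]⟩
  | r :: rs, 0, acc, x, hs, hc, _, hg =>
      ⟨acc, hg, hs, by rw [lc_zero _ _ (Nat.le_zero.mp hc), add_zero]⟩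
  | r :: rs, l + 1, acc, x, hs, hc, hr, hg => by
      have hs' : Bool.rec (motive := fun _ => Bool) false (scan P rs (l + 1) acc)
          (scan P rs l (Nat.xor acc r)) = true := hs
      have hr' : ∀ r' ∈ rs, good 68 (r' >>> 34) = true := fun r' h => hr r' (by simp [h])
      rw [cn] at hc
      cases h1 : scan P rs l (Nat.xor acc r) with
      | false => rw [h1] at hs'; exact absurd hs' (by simp)
      | true =>
        rw [h1] at hs'
        by_cases hx : x 0 = 0
        · obtain ⟨n, h2, h3, h4⟩ := scan_spec P rs (l + 1) acc (fun k => x (k + 1)) hs'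
            (by omega) hr' hg
          exact ⟨n, h2, h3, by rw [h4, lc, hx]; simp⟩
        · have hx1 : x 0 = 1 := by
            revert hx
            generalize x 0 = a
            revert a; decide
          have hg' : good 68 ((Nat.xor acc r) >>> 34) = true := by
            have : (acc ^^^ r) >>> 34 = acc >>> 34 ^^^ r >>> 34 := Nat.shiftRight_xor_distrib
            change good 68 ((acc ^^^ r) >>> 34) = true
            rw [this]
            exact good_xor _ _ _ hg (hr r (by simp))
          rw [if_pos hx] at hc
          obtain ⟨n, h2, h3, h4⟩ := scan_spec P rs l (Nat.xor acc r) (fun k => x (k + 1)) h1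
            (by omega) hr' hg'
          exact ⟨n, h2, h3, by rw [h4, lc, hx1, dec_xor, one_smul, add_assoc]⟩

/-! ### The code -/

lemma rowsL_good : ∀ r ∈ rowsL, good 68 (r >>> 34) = true := by decide +kernel
lemma rowsR_good : ∀ r ∈ rowsR, good 68 (r >>> 34) = true := by decide +kernel
lemma low_good : ∀ r ∈ lowShadow, good 68 (r >>> 34) = true := by decide +kernel
lemma rowsL_orth : ∀ r ∈ rowsL, ∀ r' ∈ rowsL, dotN r r' = 0 := by decide +kernel
lemma rowsL_sys : ∀ i < 34, ∀ j < 34,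
    (rowsL.getD i 0).testBit (34 + 7 * j) = decide (j = i) := by decide +kernel
lemma rowsR_sys : ∀ i < 34, ∀ j < 34,
    (rowsR.getD i 0).testBit (34 + 7 * (34 + j)) = decide (j = i) := by decide +kernel

/-- The code. -/
def theCode : Submodule (ZMod 2) (Fin 68 → ZMod 2) :=
  Submodule.span (ZMod 2) {v | ∃ r ∈ rowsL, dec r = v}

/-- xor of the selected rows -/
def xc : List ℕ → (ℕ → Bool) → ℕ
  | [], _ => 0
  | r :: rs, x => Nat.xor (bif x 0 then r else 0) (xc rs (fun k => x (k + 1)))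

lemma dec_zero : dec 0 = 0 := by
  funext i; simp [dec]

lemma xc_mem (C : Submodule (ZMod 2) (Fin 68 → ZMod 2)) : ∀ (rs : List ℕ) (x : ℕ → Bool),
    (∀ r ∈ rs, dec r ∈ C) → dec (xc rs x) ∈ C
  | [], x, _ => by rw [xc, dec_zero]; exact C.zero_mem
  | r :: rs, x, h => by
      rw [xc, dec_xor]
      refine C.add_mem ?_ (xc_mem C rs _ fun r' hr' => h r' (by simp [hr']))
      cases x 0
      · rw [cond_false, dec_zero]; exact C.zero_mem
      · exact h r (by simp)

lemma rowsL_mem : ∀ r ∈ rowsL, dec r ∈ theCode :=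
  fun r hr => Submodule.subset_span ⟨r, hr, rfl⟩

lemma rowsR_comb : ∀ r ∈ rowsR,
    (xc rowsL fun i => r.testBit (34 + 7 * i)) >>> 34 = r >>> 34 := by decide +kernel

lemma rowsR_mem : ∀ r ∈ rowsR, dec r ∈ theCode := fun r hr => by
  rw [← dec_congr (rowsR_comb r hr)]
  exact xc_mem _ _ _ rowsL_mem

lemma getD_mem (rs : List ℕ) (k : ℕ) (h : k < rs.length) : rs.getD k 0 ∈ rs := by
  rw [List.getD_eq_getElem _ _ h]; exact List.getElem_mem h

lemma rowsL_len : rowsL.length = 34 := rfl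
lemma rowsR_len : rowsR.length = 34 := rfl

lemma zero_of_left (w : Fin 68 → ZMod 2) (hw : w ∈ dualCode theCode)
    (h0 : ∀ k < 34, co w k = 0) : w = 0 := by
  funext i
  by_cases hi : (i : ℕ) < 34
  · rw [← co_fin w, h0 _ hi]; rfl
  · have hi2 := i.2
    have hj : (i : ℕ) - 34 < 34 := by omega
    have h := hw _ (rowsR_mem _ (getD_mem rowsR ((i : ℕ) - 34) (by rw [rowsR_len]; exact hj)))
    rw [Finset.sum_eq_single i] at h
    · have h2 := rowsR_sys _ hj _ hj
      rw [show 34 + 7 * (34 + ((i : ℕ) - 34)) = 34 + 7 * (i : ℕ) by omega] at h2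
      simp only [dec, h2] at h
      simpa using h
    · intro k _ hk
      have hk2 := k.2
      by_cases hk3 : (k : ℕ) < 34
      · rw [← co_fin w, h0 _ hk3, zero_mul]
      · have h2 := rowsR_sys _ hj ((k : ℕ) - 34) (by omega)
        rw [show 34 + 7 * (34 + ((k : ℕ) - 34)) = 34 + 7 * (k : ℕ) by omega] at h2
        have h3 : (k : ℕ) - 34 ≠ (i : ℕ) - 34 := by
          intro h'; apply hk; ext; omega
        simp only [dec, h2, h3]; simp
    · simp

lemma zero_of_right (w : Fin 68 → ZMod 2) (hw : w ∈ dualCode theCode)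
    (h0 : ∀ k < 34, co w (34 + k) = 0) : w = 0 := by
  funext i
  by_cases hi : ¬ (i : ℕ) < 34
  · have hi2 := i.2
    have := h0 ((i : ℕ) - 34) (by omega)
    rw [show 34 + ((i : ℕ) - 34) = (i : ℕ) by omega] at this
    rw [← co_fin w, this]; rfl
  · push Not at hi
    have h := hw _ (rowsL_mem _ (getD_mem rowsL (i : ℕ) (by rw [rowsL_len]; exact hi)))
    rw [Finset.sum_eq_single i] at h
    · have h2 := rowsL_sys _ hi _ hi
      simp only [dec, h2] at h
      simpa using h
    · intro k _ hk
      have hk2 := k.2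
      by_cases hk3 : (k : ℕ) < 34
      · have h2 := rowsL_sys _ hi (k : ℕ) hk3
        have h3 : (k : ℕ) ≠ (i : ℕ) := by
          intro h'; apply hk; ext; omega
        simp only [dec, h2, h3]; simp
      · have := h0 ((k : ℕ) - 34) (by omega)
        rw [show 34 + ((k : ℕ) - 34) = (k : ℕ) by omega] at this
        rw [← co_fin w, this, zero_mul]
    · simp

lemma co_add (v w : Fin 68 → ZMod 2) (k : ℕ) : co (v + w) k = co v k + co w k := by
  unfold co; split_ifs <;> simp

lemma co_sub (v w : Fin 68 → ZMod 2) (k : ℕ) : co (v - w) k = co v k - co w k := by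
  unfold co; split_ifs <;> simp

lemma co_lc (rs : List ℕ) (x : ℕ → ZMod 2) (k : ℕ) (hk : k < 68) : co (lc rs x) k
    = ∑ i ∈ Finset.range rs.length, x i * co (dec (rs.getD i 0)) k := by
  simp [lc_eq, co, hk, Finset.sum_apply]

lemma co_lcL (x : ℕ → ZMod 2) (k : ℕ) (hk : k < 34) : co (lc rowsL x) k = x k := by
  rw [co_lc _ _ _ (by omega), rowsL_len, Finset.sum_eq_single k]
  · rw [co_dec _ _ (by omega), rowsL_sys k hk k hk]; simp
  · intro i hi hne
    rw [co_dec _ _ (by omega), rowsL_sys i (Finset.mem_range.mp hi) k hk]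
    simp [hne.symm]
  · intro h; exact absurd (Finset.mem_range.mpr hk) h

lemma co_lcR (x : ℕ → ZMod 2) (k : ℕ) (hk : k < 34) : co (lc rowsR x) (34 + k) = x k := by
  rw [co_lc _ _ _ (by omega), rowsR_len, Finset.sum_eq_single k]
  · rw [co_dec _ _ (by omega), rowsR_sys k hk k hk]; simp
  · intro i hi hne
    rw [co_dec _ _ (by omega), rowsR_sys i (Finset.mem_range.mp hi) k hk]
    simp [hne.symm]
  · intro h; exact absurd (Finset.mem_range.mpr hk) h

lemma code_le_dual : theCode ≤ dualCode theCode := by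
  have key : ∀ r ∈ rowsL, ∀ c ∈ theCode, ∑ i, dec r i * c i = 0 := by
    intro r hr c hc
    unfold theCode at hc
    induction hc using Submodule.span_induction with
    | mem c h =>
      obtain ⟨r', hr', rfl⟩ := h
      have h1 := dot_dec _ _ (rowsL_good r hr) (rowsL_good r' hr')
      rw [rowsL_orth r hr r' hr', Nat.cast_zero] at h1
      exact h1
    | zero => simp
    | add x y _ _ hx hy => simp [mul_add, Finset.sum_add_distrib, hx, hy]
    | smul a x _ hx =>
      have : ∑ i, dec r i * (a • x) i = a * ∑ i, dec r i * x i := by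
        rw [Finset.mul_sum]
        refine Finset.sum_congr rfl fun i _ => ?_
        simp only [Pi.smul_apply, smul_eq_mul]; ring
      rw [this, hx, mul_zero]
  refine Submodule.span_le.mpr ?_
  rintro v ⟨r, hr, hv⟩
  rw [← hv]
  exact key r hr

lemma repL (v : Fin 68 → ZMod 2) (hv : v ∈ dualCode theCode) : v = lc rowsL (co v) := by
  rw [← sub_eq_zero]
  refine zero_of_left _ (Submodule.sub_mem _ hv (code_le_dual (lc_mem _ _ _ rowsL_mem))) ?_
  intro k hk
  rw [co_sub, co_lcL _ _ hk, sub_self]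

lemma repR (v : Fin 68 → ZMod 2) (hv : v ∈ dualCode theCode) :
    v = lc rowsR (fun k => co v (34 + k)) := by
  rw [← sub_eq_zero]
  refine zero_of_right _ (Submodule.sub_mem _ hv (code_le_dual (lc_mem _ _ _ rowsR_mem))) ?_
  intro k hk
  rw [co_sub, co_lcR _ _ hk, sub_self]

lemma selfDual : IsSelfDual theCode := by
  refine le_antisymm code_le_dual fun v hv => ?_
  rw [repL v hv]
  exact lc_mem _ _ _ rowsL_mem

lemma mem_iff (v : Fin 68 → ZMod 2) : v ∈ theCode ↔ v ∈ dualCode theCode := by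
  rw [← selfDual]

/-! ### Solving the linear equations for the weight distribution -/

set_option maxRecDepth 100000 in
set_option maxHeartbeats 4000000 in
lemma final_solve (a b : ℕ → ℤ)
    (ha : ∀ z : ℤ, 2 ^ 34 * ∑ w ∈ Finset.range 69, a w * z ^ w
      = ∑ w ∈ Finset.range 69, a w * ((1 - z) ^ w * (1 + z) ^ (68 - w)))
    (hb : ∀ z : ℤ, 2 ^ 34 * ∑ w ∈ Finset.range 69, b w * z ^ w
      = ∑ w ∈ Finset.range 69, a w * (sg ((w / 2 : ℕ) : ZMod 2) *
          ((1 - z) ^ w * (1 + z) ^ (68 - w))))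
    (a0 : a 0 = 1) (alow : ∀ w, 0 < w → w < 12 → a w = 0) (aodd : ∀ w, w % 2 = 1 → a w = 0)
    (asym : ∀ w, w ≤ 68 → a (68 - w) = a w)
    (bmod : ∀ w, w % 4 ≠ 2 → b w = 0) (b2 : b 2 = 0) (b6 : b 6 = 2) (b10 : b 10 = 33)
    (bsym : ∀ w, w ≤ 68 → b (68 - w) = b w) :
    a 12 = 686 ∧ a 14 = 13960 := by
  have sa : ∀ f : ℕ → ℤ, ∑ w ∈ Finset.range 69, a w * f w
      = (f 0 + f 68) + a 12 * (f 12 + f 56) + a 14 * (f 14 + f 54) + a 16 * (f 16 + f 52) + a 18 * (f 18 + f 50) + a 20 * (f 20 + f 48) + a 22 * (f 22 + f 46) + a 24 * (f 24 + f 44) + a 26 * (f 26 + f 42) + a 28 * (f 28 + f 40) + a 30 * (f 30 + f 38) + a 32 * (f 32 + f 36) + a 34 * f 34 := by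
    intro f
    have z1 : a 1 = 0 := alow 1 (by norm_num) (by norm_num)
    have z2 : a 2 = 0 := alow 2 (by norm_num) (by norm_num)
    have z3 : a 3 = 0 := alow 3 (by norm_num) (by norm_num)
    have z4 : a 4 = 0 := alow 4 (by norm_num) (by norm_num)
    have z5 : a 5 = 0 := alow 5 (by norm_num) (by norm_num)
    have z6 : a 6 = 0 := alow 6 (by norm_num) (by norm_num)
    have z7 : a 7 = 0 := alow 7 (by norm_num) (by norm_num)
    have z8 : a 8 = 0 := alow 8 (by norm_num) (by norm_num)
    have z9 : a 9 = 0 := alow 9 (by norm_num) (by norm_num)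
    have z10 : a 10 = 0 := alow 10 (by norm_num) (by norm_num)
    have z11 : a 11 = 0 := alow 11 (by norm_num) (by norm_num)
    have z13 : a 13 = 0 := aodd 13 rfl
    have z15 : a 15 = 0 := aodd 15 rfl
    have z17 : a 17 = 0 := aodd 17 rfl
    have z19 : a 19 = 0 := aodd 19 rfl
    have z21 : a 21 = 0 := aodd 21 rfl
    have z23 : a 23 = 0 := aodd 23 rfl
    have z25 : a 25 = 0 := aodd 25 rfl
    have z27 : a 27 = 0 := aodd 27 rfl
    have z29 : a 29 = 0 := aodd 29 rfl
    have z31 : a 31 = 0 := aodd 31 rfl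
    have z33 : a 33 = 0 := aodd 33 rfl
    have z35 : a 35 = 0 := aodd 35 rfl
    have z37 : a 37 = 0 := aodd 37 rfl
    have z39 : a 39 = 0 := aodd 39 rfl
    have z41 : a 41 = 0 := aodd 41 rfl
    have z43 : a 43 = 0 := aodd 43 rfl
    have z45 : a 45 = 0 := aodd 45 rfl
    have z47 : a 47 = 0 := aodd 47 rfl
    have z49 : a 49 = 0 := aodd 49 rfl
    have z51 : a 51 = 0 := aodd 51 rfl
    have z53 : a 53 = 0 := aodd 53 rfl
    have z55 : a 55 = 0 := aodd 55 rfl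
    have z57 : a 57 = 0 := aodd 57 rfl
    have z59 : a 59 = 0 := aodd 59 rfl
    have z61 : a 61 = 0 := aodd 61 rfl
    have z63 : a 63 = 0 := aodd 63 rfl
    have z65 : a 65 = 0 := aodd 65 rfl
    have z67 : a 67 = 0 := aodd 67 rfl
    have z68 : a 68 = a 0 := asym 0 (by norm_num)
    have z66 : a 66 = a 2 := asym 2 (by norm_num)
    have z64 : a 64 = a 4 := asym 4 (by norm_num)
    have z62 : a 62 = a 6 := asym 6 (by norm_num)
    have z60 : a 60 = a 8 := asym 8 (by norm_num)
    have z58 : a 58 = a 10 := asym 10 (by norm_num)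
    have z56 : a 56 = a 12 := asym 12 (by norm_num)
    have z54 : a 54 = a 14 := asym 14 (by norm_num)
    have z52 : a 52 = a 16 := asym 16 (by norm_num)
    have z50 : a 50 = a 18 := asym 18 (by norm_num)
    have z48 : a 48 = a 20 := asym 20 (by norm_num)
    have z46 : a 46 = a 22 := asym 22 (by norm_num)
    have z44 : a 44 = a 24 := asym 24 (by norm_num)
    have z42 : a 42 = a 26 := asym 26 (by norm_num)
    have z40 : a 40 = a 28 := asym 28 (by norm_num)
    have z38 : a 38 = a 30 := asym 30 (by norm_num)
    have z36 : a 36 = a 32 := asym 32 (by norm_num)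
    simp only [Finset.sum_range_succ, Finset.sum_range_zero, a0, z1, z2, z3, z4, z5, z6, z7, z8, z9, z10, z11, z13, z15, z17, z19, z21, z23, z25, z27, z29, z31, z33, z35, z37, z39, z41, z43, z45, z47, z49, z51, z53, z55, z57, z59, z61, z63, z65, z67, z68, z66, z64, z62, z60, z58, z56, z54, z52, z50, z48, z46, z44, z42, z40, z38, z36]
    ring
  have sb : ∀ f : ℕ → ℤ, ∑ w ∈ Finset.range 69, b w * f w
      = 2 * (f 6 + f 62) + 33 * (f 10 + f 58) + b 14 * (f 14 + f 54) + b 18 * (f 18 + f 50) + b 22 * (f 22 + f 46) + b 26 * (f 26 + f 42) + b 30 * (f 30 + f 38) + b 34 * f 34 := by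
    intro f
    have z0 : b 0 = 0 := bmod 0 (by norm_num)
    have z1 : b 1 = 0 := bmod 1 (by norm_num)
    have z3 : b 3 = 0 := bmod 3 (by norm_num)
    have z4 : b 4 = 0 := bmod 4 (by norm_num)
    have z5 : b 5 = 0 := bmod 5 (by norm_num)
    have z7 : b 7 = 0 := bmod 7 (by norm_num)
    have z8 : b 8 = 0 := bmod 8 (by norm_num)
    have z9 : b 9 = 0 := bmod 9 (by norm_num)
    have z11 : b 11 = 0 := bmod 11 (by norm_num)
    have z12 : b 12 = 0 := bmod 12 (by norm_num)
    have z13 : b 13 = 0 := bmod 13 (by norm_num)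
    have z15 : b 15 = 0 := bmod 15 (by norm_num)
    have z16 : b 16 = 0 := bmod 16 (by norm_num)
    have z17 : b 17 = 0 := bmod 17 (by norm_num)
    have z19 : b 19 = 0 := bmod 19 (by norm_num)
    have z20 : b 20 = 0 := bmod 20 (by norm_num)
    have z21 : b 21 = 0 := bmod 21 (by norm_num)
    have z23 : b 23 = 0 := bmod 23 (by norm_num)
    have z24 : b 24 = 0 := bmod 24 (by norm_num)
    have z25 : b 25 = 0 := bmod 25 (by norm_num)
    have z27 : b 27 = 0 := bmod 27 (by norm_num)
    have z28 : b 28 = 0 := bmod 28 (by norm_num)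
    have z29 : b 29 = 0 := bmod 29 (by norm_num)
    have z31 : b 31 = 0 := bmod 31 (by norm_num)
    have z32 : b 32 = 0 := bmod 32 (by norm_num)
    have z33 : b 33 = 0 := bmod 33 (by norm_num)
    have z35 : b 35 = 0 := bmod 35 (by norm_num)
    have z36 : b 36 = 0 := bmod 36 (by norm_num)
    have z37 : b 37 = 0 := bmod 37 (by norm_num)
    have z39 : b 39 = 0 := bmod 39 (by norm_num)
    have z40 : b 40 = 0 := bmod 40 (by norm_num)
    have z41 : b 41 = 0 := bmod 41 (by norm_num)
    have z43 : b 43 = 0 := bmod 43 (by norm_num)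
    have z44 : b 44 = 0 := bmod 44 (by norm_num)
    have z45 : b 45 = 0 := bmod 45 (by norm_num)
    have z47 : b 47 = 0 := bmod 47 (by norm_num)
    have z48 : b 48 = 0 := bmod 48 (by norm_num)
    have z49 : b 49 = 0 := bmod 49 (by norm_num)
    have z51 : b 51 = 0 := bmod 51 (by norm_num)
    have z52 : b 52 = 0 := bmod 52 (by norm_num)
    have z53 : b 53 = 0 := bmod 53 (by norm_num)
    have z55 : b 55 = 0 := bmod 55 (by norm_num)
    have z56 : b 56 = 0 := bmod 56 (by norm_num)
    have z57 : b 57 = 0 := bmod 57 (by norm_num)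
    have z59 : b 59 = 0 := bmod 59 (by norm_num)
    have z60 : b 60 = 0 := bmod 60 (by norm_num)
    have z61 : b 61 = 0 := bmod 61 (by norm_num)
    have z63 : b 63 = 0 := bmod 63 (by norm_num)
    have z64 : b 64 = 0 := bmod 64 (by norm_num)
    have z65 : b 65 = 0 := bmod 65 (by norm_num)
    have z67 : b 67 = 0 := bmod 67 (by norm_num)
    have z68 : b 68 = 0 := bmod 68 (by norm_num)
    have z66 : b 66 = b 2 := bsym 2 (by norm_num)
    have z62 : b 62 = b 6 := bsym 6 (by norm_num)
    have z58 : b 58 = b 10 := bsym 10 (by norm_num)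
    have z54 : b 54 = b 14 := bsym 14 (by norm_num)
    have z50 : b 50 = b 18 := bsym 18 (by norm_num)
    have z46 : b 46 = b 22 := bsym 22 (by norm_num)
    have z42 : b 42 = b 26 := bsym 26 (by norm_num)
    have z38 : b 38 = b 30 := bsym 30 (by norm_num)
    simp only [Finset.sum_range_succ, Finset.sum_range_zero, b2, b6, b10, z0, z1, z3, z4, z5, z7, z8, z9, z11, z12, z13, z15, z16, z17, z19, z20, z21, z23, z24, z25, z27, z28, z29, z31, z32, z33, z35, z36, z37, z39, z40, z41, z43, z44, z45, z47, z48, z49, z51, z52, z53, z55, z56, z57, z59, z60, z61, z63, z64, z65, z67, z68, z66, z62, z58, z54, z50, z46, z42, z38]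
    ring
  have p0 : ∀ w : ℕ, w % 4 = 0 → sg ((w / 2 : ℕ) : ZMod 2) = 1 := by
    intro w hw
    obtain ⟨k, rfl⟩ : ∃ k, w = 4 * k := ⟨w / 4, by omega⟩
    rw [show 4 * k / 2 = 2 * k by omega, Nat.cast_mul, show ((2 : ℕ) : ZMod 2) = 0 by decide, zero_mul]
    rfl
  have p2 : ∀ w : ℕ, w % 4 = 2 → sg ((w / 2 : ℕ) : ZMod 2) = -1 := by
    intro w hw
    obtain ⟨k, rfl⟩ : ∃ k, w = 4 * k + 2 := ⟨w / 4, by omega⟩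
    rw [show (4 * k + 2) / 2 = 2 * k + 1 by omega, Nat.cast_add, Nat.cast_mul,
      show ((2 : ℕ) : ZMod 2) = 0 by decide, zero_mul]
    rfl
  have ha0 := ha 0
  rw [sa, sa] at ha0
  have ha2 := ha 2
  rw [sa, sa] at ha2
  have ha4 := ha 4
  rw [sa, sa] at ha4
  have ha5 := ha 5
  rw [sa, sa] at ha5
  have ha6 := ha 6
  rw [sa, sa] at ha6
  have ha7 := ha 7
  rw [sa, sa] at ha7
  have ha8 := ha 8
  rw [sa, sa] at ha8
  have ha9 := ha 9
  rw [sa, sa] at ha9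
  have ha10 := ha 10
  rw [sa, sa] at ha10
  have hb1 := hb 1
  rw [sb, sa] at hb1
  have hb2 := hb 2
  rw [sb, sa] at hb2
  have hb3 := hb 3
  rw [sb, sa] at hb3
  have hb4 := hb 4
  rw [sb, sa] at hb4
  have hb5 := hb 5
  rw [sb, sa] at hb5
  have hb6 := hb 6
  rw [sb, sa] at hb6
  have hb7 := hb 7
  rw [sb, sa] at hb7
  have hb8 := hb 8
  rw [sb, sa] at hb8
  have hb9 := hb 9
  rw [sb, sa] at hb9
  rw [p0 0 rfl,
    p0 68 rfl,
    p0 12 rfl,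
    p2 14 rfl,
    p0 16 rfl,
    p2 18 rfl,
    p0 20 rfl,
    p2 22 rfl,
    p0 24 rfl,
    p2 26 rfl,
    p0 28 rfl,
    p2 30 rfl,
    p0 32 rfl,
    p2 34 rfl,
    p0 56 rfl,
    p2 54 rfl,
    p0 52 rfl,
    p2 50 rfl,
    p0 48 rfl,
    p2 46 rfl,
    p0 44 rfl,
    p2 42 rfl,
    p0 40 rfl,
    p2 38 rfl,
    p0 36 rfl] at hb1 hb2 hb3 hb4 hb5 hb6 hb7 hb8 hb9
  norm_num only at ha0 ha2 ha4 ha5 ha6 ha7 ha8 ha9 ha10 hb1 hb2 hb3 hb4 hb5 hb6 hb7 hb8 hb9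
  have e12 : (28572916347869303338930112221666232114915182203430302365375628177529220975244020211111219723153345635364153640231261235411428822776942697923949457511687387160546276571953904052338688000000000000000 : ℤ) * a 12 = 28572916347869303338930112221666232114915182203430302365375628177529220975244020211111219723153345635364153640231261235411428822776942697923949457511687387160546276571953904052338688000000000000000 * 686 := by
    linear_combination
      (-2178093598626949565788690629069302144676605028940655035437863204309668348371373164760044232437410181318172234217532675975485333057848940327606026968010553827364957760875188963873378479503283317195208130560) * ha0 +
      (241472189411981019671532158229519465040909669748647572044405686669327568644687344407359045700102133123869001698909997524630650890291477854618733001300591255608302301886808064000000) * ha2 +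
      (2673536693020922575173456101303395705242668114074745733013989448811355017396504716270039184477302530008537854749506386132763991700479078879531495168299471669821440) * ha4 +
      (-15710366402881437683367069533679710789452725341673441999030182400905641459958598375458425318674752725907124700258093333930914786627410385305473364256028644264) * ha5 +
      (624031072204194985613749014630815275832599941480884287816212973570970488971720414200317864399577571531409662390066621196479579776108560627480777960980480) * ha6 +
      (-78900758262721392735749319285318297455669291382152162095494825057418020108201064664324738603085416511840463049542596256842473379207574640114347734375) * ha7 +
      (19915839565199078155161302296982132757648652728538305225583438649676340671204167867495243834020593189793057546735549186704420123045345099776000000) * ha8 +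
      (-6943481088685648398767458967352093035336014478671767607155770334943358066043955307737637325168978545209046957934871319886685242422183162138787) * ha9 +
      (2121775875483466609580944913008939852272984435355299245771406354168827526983938735359017846937815457597427771997296474582842074040295751680) * ha10 +
      (-37880497958141946200995556247675906978098422753109951149734667267705486718545120131473753095951489230687627995267842423015927218726036653659966228149052191150040164429987840) * hb1 +
      (2963242049812821834417585618276105174198678807620794668294987864013223507195026804662452486115268911194766634339077252044100521740837072166017557463242279537868800) * hb2 +
      (-915847067138319361415564822734177698104721408730463975544756111865145098862084024732728197600601402868806745032017015232482829750229259335540401520127246336) * hb3 +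
      (8444479915465924598375895065927384776685715955445599524690568769960812632392946836839583776720261389202541356942880192579266397021236388051789568540672) * hb4 +
      (-454179153562727132155221089987818689160623676538772228267522200769229999775111123114440580433950827391746343466166858871953214668800000000000000000) * hb5 +
      (66293998297798511509733785893946581864165704787130016778851952983894839773419051783723004786668943247989030567677784858716631135137462615015424) * hb6 +
      (-16370764015710215569663116847389786962247141756596207197725060929037181900864375482405255623906556694319803454461122765300709990416085155840) * hb7 +
      (4706531617058012312784587224452194827538842941565755347501303441294062325387438356267979476788211111786562554286991227611772725034483712) * hb8 +
      (-1107200866837357986958477638669792063268214742945199449746467495454144654418736927988078088541742606979964098327008248451090821939200) * hb9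
  have e14 : (357161454348366291736626402770827901436439777542878779567195352219115262190550252638890246539416820442051920502890765442642860284711783724049368218896092339506828457149423800654233600000000000000000 : ℤ) * a 14 = 357161454348366291736626402770827901436439777542878779567195352219115262190550252638890246539416820442051920502890765442642860284711783724049368218896092339506828457149423800654233600000000000000000 * 13960 := by
    linear_combination
      (53665815631951710639249894767972741614191927843939210246414388981873203047836846385802308847301652754498787928406183162088010793501746725856897240084324921472923834822466939638162795129343389033594659799040) * ha0 +
      (-5949593866207065484930606567438369869195765387988063031630057522735203175599507887410064794314782648966000517012878390919461693083717054571844062210736685821069253731109830656000000) * ha2 +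
      (-65872872963433209300111404857280765936445443518064302608177583409427182947848158311336506260342085886384647754583415308065354907954925628008695807312447534341816320) * ha4 +
      (387085560860906265351048744218221924144380627614526955950292265266589133673133399533648297638189402171880798026944095110737329743681942953958984639157840692072) * ha5 +
      (-15375420781379926369970722690306546925552216511105406943093591595485546367908723094493809687875828962744183942342614425556883565968759429370667161868042240) * ha6 +
      (1944025985311285167092549620477705045813579037236374571339394800617749119195361816911876344036331073733529231833427286002866404193314545702528873359375) * ha7 +
      (-490703971959224935858499038253856295548109537866207020824144343944692963875215236492602570531049557725939527484062888359726515760050108104704000000) * ha8 +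
      (171079612672965245561965966275980984016314363469160914040060008954203872133971599480457400118027250960936861515297048790182600248342849307800811) * ha9 +
      (-52278190063503430844032510476774395169942042047904554099361105567208627911415266181747288675873872870583471105796635667961124728545833123840) * ha10 +
      (941450910242493472816591691116602952041274465985532077174906688523617185572591456495434043013440269661413045585018899047456091365243206016551440718801443561793503705494978560) * hb1 +
      (-73645269816028415150166230013875893552456455003336271925367600794632487781095886757104720870091662601673372584674972710690776277434849652279581783220367647362252800) * hb2 +
      (22760449550176310947478958624335057795889861387036165293665314146687210511869291355956792902401474987243123419476288439854155077126502984326655215823747022848) * hb3 +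
      (-209834179098820640358162544255222459679611600590577400820193392778164472005053431312044665580005045625429716256049095890328035202706716852059582880546816) * hb4 +
      (11282628715563642736606835287783550923308653145981333362002560992854557866307072365579699103197937550021225365214233648822888903475200000000000000000) * hb5 +
      (-1645963554962235308835575936869534451231770279505335631250365359581267829811292611895359076071278761894589701314004559485485278347710226499633152) * hb6 +
      (406044854018089633421635356061637465145460106501948300841732368330274431012492204343429997347566629495704001210327211404876765533464753602560) * hb7 +
      (-116536915036720131152997685737275353460013407086871306330755605991519418485498632504460782396722758686801027379370892907577961093116461056) * hb8 +
      (27381899494509539159221977567849970278814754321148442714023143560577298316739523186231497832657658208471274345167810616986904507187200) * hb9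
  exact ⟨mul_left_cancel₀ (by norm_num) e12, mul_left_cancel₀ (by norm_num) e14⟩

/-! ### Weights in the code and in its shadow -/

lemma zmod2_self (v : Fin 68 → ZMod 2) : v + v = 0 := by
  funext i
  simp only [Pi.add_apply, Pi.zero_apply]
  generalize v i = a
  revert a; decide

lemma dot_eq_norm (v w : Fin 68 → ZMod 2) :
    ∑ i, v i * w i = (hammingNorm (v * w) : ZMod 2) := by
  rw [← sum_eq_norm]; rfl

lemma norm_add (v w : Fin 68 → ZMod 2) :
    hammingNorm (v + w) + 2 * hammingNorm (v * w) = hammingNorm v + hammingNorm w := by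
  simp only [hammingNorm, Finset.card_filter, Finset.mul_sum]
  rw [← Finset.sum_add_distrib, ← Finset.sum_add_distrib]
  refine Finset.sum_congr rfl fun i _ => ?_
  have key : ∀ a b : ZMod 2, ((if a + b ≠ 0 then 1 else 0) + 2 * (if a * b ≠ 0 then 1 else 0) : ℕ)
      = (if a ≠ 0 then 1 else 0) + (if b ≠ 0 then 1 else 0) := by decide
  exact key (v i) (w i)

lemma code_dot {v w : Fin 68 → ZMod 2} (hv : v ∈ theCode) (hw : w ∈ theCode) :
    ∑ i, v i * w i = 0 := code_le_dual hv w hw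

lemma cast_zero_even {n : ℕ} (h : (n : ZMod 2) = 0) : n % 2 = 0 := by
  have := (ZMod.natCast_eq_zero_iff n 2).mp h
  omega

lemma code_even {v : Fin 68 → ZMod 2} (hv : v ∈ theCode) : hammingNorm v % 2 = 0 := by
  have h := code_dot hv hv
  have h2 : ∀ a : ZMod 2, a * a = a := by decide
  simp only [h2] at h
  rw [sum_eq_norm] at h
  exact cast_zero_even h

lemma mem_of_orth (w : Fin 68 → ZMod 2) (h : ∀ r ∈ rowsL, ∑ i, w i * dec r i = 0) :
    w ∈ theCode := by
  rw [mem_iff]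
  intro c hc
  unfold theCode at hc
  induction hc using Submodule.span_induction with
  | mem c h' =>
    obtain ⟨r', hr', rfl⟩ := h'
    exact h r' hr'
  | zero => simp
  | add x y _ _ hx hy => simp [mul_add, Finset.sum_add_distrib, hx, hy]
  | smul a x _ hx =>
    have : ∑ i, w i * (a • x) i = a * ∑ i, w i * x i := by
      rw [Finset.mul_sum]
      refine Finset.sum_congr rfl fun i _ => ?_
      simp only [Pi.smul_apply, smul_eq_mul]; ring
    rw [this, hx, mul_zero]

lemma mem_of_dotN (n : ℕ) (hn : good 68 (n >>> 34) = true) (h : ∀ r ∈ rowsL, dotN n r = 0) :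
    dec n ∈ theCode := by
  refine mem_of_orth _ fun r hr => ?_
  have h1 := dot_dec _ _ hn (rowsL_good r hr)
  rw [h r hr, Nat.cast_zero] at h1
  exact h1

lemma shadV_good : good 68 (shadV >>> 34) = true := by decide +kernel
lemma shadL_good : good 68 (shadL >>> 34) = true := by decide +kernel
lemma shadR_good : good 68 (shadR >>> 34) = true := by decide +kernel
lemma shadV_norm : hammingNorm (dec shadV) = 6 := by
  rw [norm_dec _ shadV_good]; decide +kernel
lemma rows_shad : ∀ r ∈ rowsL, dotN r shadV = ((r >>> 34) % 127 / 2) % 2 := by decide +kernel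

lemma shadow_char {c : Fin 68 → ZMod 2} (hc : c ∈ theCode) :
    ∑ i, c i * dec shadV i = ((hammingNorm c / 2 : ℕ) : ZMod 2) := by
  have hc' := hc
  unfold theCode at hc'
  induction hc' using Submodule.span_induction with
  | mem c h =>
    obtain ⟨r, hr, rfl⟩ := h
    have h1 := dot_dec _ _ (rowsL_good r hr) shadV_good
    rw [rows_shad r hr, ZMod.natCast_mod, ← norm_dec _ (rowsL_good r hr)] at h1
    exact h1
  | zero => simp
  | add x y hx hy ihx ihy =>
    have ihx := ihx hx
    have ihy := ihy hy
    simp only [Pi.add_apply, add_mul, Finset.sum_add_distrib, ihx, ihy]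
    have h1 := norm_add x y
    have hx2 := code_even hx
    have hy2 := code_even hy
    have h3 := code_dot hx hy
    rw [dot_eq_norm] at h3
    have h4 : hammingNorm x / 2 + hammingNorm y / 2
        = hammingNorm (x + y) / 2 + hammingNorm (x * y) := by omega
    have h5 := congrArg (Nat.cast : ℕ → ZMod 2) h4
    push_cast at h5
    rw [h5, h3, add_zero]
  | smul a x hx ih =>
    have ha : ∀ a : ZMod 2, a = 0 ∨ a = 1 := by decide
    rcases ha a with rfl | rfl
    · simp
    · rw [one_smul]; exact ih hx

lemma shadow_mod {u : Fin 68 → ZMod 2} (hu : u + dec shadV ∈ theCode) :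
    hammingNorm u % 4 = 2 := by
  have h1 := norm_add (u + dec shadV) (dec shadV)
  rw [add_assoc, zmod2_self, add_zero, shadV_norm] at h1
  have h2 := shadow_char hu
  rw [dot_eq_norm] at h2
  have h3 := code_even hu
  have h4 := (ZMod.natCast_eq_natCast_iff' _ _ 2).mp h2
  omega

/-! ### The enumerations -/

/-- One unfolding step of `scan`. -/
lemma scan_step {P : ℕ → Bool} {rs ts : List ℕ} {r l acc : ℕ} (hrs : rs = r :: ts)
    (h1 : scan P ts l (Nat.xor acc r) = true) (h2 : scan P ts (l + 1) acc = true) :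
    scan P rs (l + 1) acc = true := by
  subst hrs
  change Bool.rec (motive := fun _ => Bool) false (scan P ts (l + 1) acc)
          (scan P ts l (Nat.xor acc r)) = true
  rw [h1]
  exact h2

lemma scan_code_R : scan okCode rowsR 4 0 = true := by decide +kernel
lemma scan_shadow_R : scan okShadow rowsR 4 shadR = true := by decide +kernel

/-- The part of the scan that starts with row `k` of the left basis. -/
noncomputable def part (P : ℕ → Bool) (acc k : ℕ) : Bool :=
  scan P (rowsL.drop (k + 1)) 4 (Nat.xor acc (rowsL.getD k 0))

lemma part_code_0 : part okCode 0 0 = true := by decide +kernel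
lemma part_code_1 : part okCode 0 1 = true := by decide +kernel
lemma part_code_2 : part okCode 0 2 = true := by decide +kernel
lemma part_code_3 : part okCode 0 3 = true := by decide +kernel
lemma part_code_4 : part okCode 0 4 = true := by decide +kernel
lemma part_code_5 : part okCode 0 5 = true := by decide +kernel
lemma part_code_6 : part okCode 0 6 = true := by decide +kernel
lemma part_code_7 : part okCode 0 7 = true := by decide +kernel
lemma part_code_8 : part okCode 0 8 = true := by decide +kernel
lemma part_code_9 : part okCode 0 9 = true := by decide +kernel
lemma part_code_rest : scan okCode (rowsL.drop 10) 5 0 = true := by decide +kernel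

lemma scan_code_L : scan okCode rowsL 5 0 = true :=
  scan_step (ts := rowsL.drop 1) (r := rowsL.getD 0 0) rfl part_code_0 <|
  scan_step (ts := rowsL.drop 2) (r := rowsL.getD 1 0) rfl part_code_1 <|
  scan_step (ts := rowsL.drop 3) (r := rowsL.getD 2 0) rfl part_code_2 <|
  scan_step (ts := rowsL.drop 4) (r := rowsL.getD 3 0) rfl part_code_3 <|
  scan_step (ts := rowsL.drop 5) (r := rowsL.getD 4 0) rfl part_code_4 <|
  scan_step (ts := rowsL.drop 6) (r := rowsL.getD 5 0) rfl part_code_5 <|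
  scan_step (ts := rowsL.drop 7) (r := rowsL.getD 6 0) rfl part_code_6 <|
  scan_step (ts := rowsL.drop 8) (r := rowsL.getD 7 0) rfl part_code_7 <|
  scan_step (ts := rowsL.drop 9) (r := rowsL.getD 8 0) rfl part_code_8 <|
  scan_step (ts := rowsL.drop 10) (r := rowsL.getD 9 0) rfl part_code_9 <|
  part_code_rest

lemma part_shadow_0 : part okShadow shadL 0 = true := by decide +kernel
lemma part_shadow_1 : part okShadow shadL 1 = true := by decide +kernel
lemma part_shadow_2 : part okShadow shadL 2 = true := by decide +kernel
lemma part_shadow_3 : part okShadow shadL 3 = true := by decide +kernel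
lemma part_shadow_4 : part okShadow shadL 4 = true := by decide +kernel
lemma part_shadow_5 : part okShadow shadL 5 = true := by decide +kernel
lemma part_shadow_6 : part okShadow shadL 6 = true := by decide +kernel
lemma part_shadow_7 : part okShadow shadL 7 = true := by decide +kernel
lemma part_shadow_8 : part okShadow shadL 8 = true := by decide +kernel
lemma part_shadow_9 : part okShadow shadL 9 = true := by decide +kernel
lemma part_shadow_rest : scan okShadow (rowsL.drop 10) 5 shadL = true := by decide +kernel

lemma scan_shadow_L : scan okShadow rowsL 5 shadL = true :=
  scan_step (ts := rowsL.drop 1) (r := rowsL.getD 0 0) rfl part_shadow_0 <|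
  scan_step (ts := rowsL.drop 2) (r := rowsL.getD 1 0) rfl part_shadow_1 <|
  scan_step (ts := rowsL.drop 3) (r := rowsL.getD 2 0) rfl part_shadow_2 <|
  scan_step (ts := rowsL.drop 4) (r := rowsL.getD 3 0) rfl part_shadow_3 <|
  scan_step (ts := rowsL.drop 5) (r := rowsL.getD 4 0) rfl part_shadow_4 <|
  scan_step (ts := rowsL.drop 6) (r := rowsL.getD 5 0) rfl part_shadow_5 <|
  scan_step (ts := rowsL.drop 7) (r := rowsL.getD 6 0) rfl part_shadow_6 <|
  scan_step (ts := rowsL.drop 8) (r := rowsL.getD 7 0) rfl part_shadow_7 <|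
  scan_step (ts := rowsL.drop 9) (r := rowsL.getD 8 0) rfl part_shadow_8 <|
  scan_step (ts := rowsL.drop 10) (r := rowsL.getD 9 0) rfl part_shadow_9 <|
  part_shadow_rest

lemma okCode_spec {n : ℕ} (hn : good 68 (n >>> 34) = true) (h : okCode n = true) :
    dec n = 0 ∨ 12 ≤ hammingNorm (dec n) := by
  rw [norm_dec n hn]
  unfold okCode at h
  cases h1 : Nat.ble 12 (Nat.mod (Nat.shiftRight n 34) 127) with
  | true => exact Or.inr (Nat.le_of_ble_eq_true h1)
  | false =>
    rw [h1] at h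
    have h2 : n >>> 34 = 0 := Nat.eq_of_beq_eq_true h
    left
    rw [← dec_zero]
    exact dec_congr (by rw [h2]; rfl)

lemma okShadow_spec {n : ℕ} (hn : good 68 (n >>> 34) = true) (h : okShadow n = true) :
    (∃ m ∈ lowShadow, dec m = dec n) ∨ 11 ≤ hammingNorm (dec n) := by
  rw [norm_dec n hn]
  unfold okShadow at h
  cases h1 : Nat.ble 11 (Nat.mod (Nat.shiftRight n 34) 127) with
  | true => exact Or.inr (Nat.le_of_ble_eq_true h1)
  | false =>
    rw [h1] at h
    have h' : (lowShadow.any fun m =>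
      Nat.beq (Nat.shiftRight n 34) (Nat.shiftRight m 34)) = true := h
    obtain ⟨m, hm, h2⟩ := List.any_eq_true.mp h'
    exact Or.inl ⟨m, hm, dec_congr (Nat.eq_of_beq_eq_true h2).symm⟩

lemma scan_left {P : ℕ → Bool} {l acc : ℕ} (hs : scan P rowsL l acc = true)
    (hg : good 68 (acc >>> 34) = true) (h0 : ∀ k < 34, acc.testBit (34 + 7 * k) = false)
    (v : Fin 68 → ZMod 2) (hv : v - dec acc ∈ theCode)
    (hl : (∑ k ∈ Finset.range 34, if co v k ≠ 0 then 1 else 0) ≤ l) :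
    ∃ n, good 68 (n >>> 34) = true ∧ P n = true ∧ dec n = v := by
  have hco : ∀ k < 34, co (v - dec acc) k = co v k := by
    intro k hk
    rw [co_sub, co_dec _ _ (by omega), h0 k hk]; simp
  have hcn : cn rowsL (co (v - dec acc)) ≤ l := by
    rw [cn_eq, rowsL_len]
    refine le_trans (le_of_eq (Finset.sum_congr rfl fun k hk => ?_)) hl
    rw [hco k (Finset.mem_range.mp hk)]
  obtain ⟨n, h1, h2, h3⟩ := scan_spec P rowsL l acc _ hs hcn rowsL_good hg
  refine ⟨n, h1, h2, ?_⟩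
  rw [h3, ← repL _ ((mem_iff _).mp hv)]
  abel

lemma scan_right {P : ℕ → Bool} {l acc : ℕ} (hs : scan P rowsR l acc = true)
    (hg : good 68 (acc >>> 34) = true)
    (h0 : ∀ k < 34, acc.testBit (34 + 7 * (34 + k)) = false)
    (v : Fin 68 → ZMod 2) (hv : v - dec acc ∈ theCode)
    (hl : (∑ k ∈ Finset.range 34, if co v (34 + k) ≠ 0 then 1 else 0) ≤ l) :
    ∃ n, good 68 (n >>> 34) = true ∧ P n = true ∧ dec n = v := by
  have hco : ∀ k < 34, co (v - dec acc) (34 + k) = co v (34 + k) := by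
    intro k hk
    rw [co_sub, co_dec _ _ (by omega), h0 k hk]; simp
  have hcn : cn rowsR (fun k => co (v - dec acc) (34 + k)) ≤ l := by
    rw [cn_eq, rowsR_len]
    refine le_trans (le_of_eq (Finset.sum_congr rfl fun k hk => ?_)) hl
    rw [hco k (Finset.mem_range.mp hk)]
  obtain ⟨n, h1, h2, h3⟩ := scan_spec P rowsR l acc _ hs hcn rowsR_good hg
  refine ⟨n, h1, h2, ?_⟩
  rw [h3, ← repR _ ((mem_iff _).mp hv)]
  abel

lemma min_weight (v : Fin 68 → ZMod 2) (hv : v ∈ theCode) (hne : v ≠ 0) :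
    12 ≤ hammingNorm v := by
  by_contra hlt
  have h2 := code_even hv
  have h3 := norm_split v
  have hv0 : v - dec 0 ∈ theCode := by rw [dec_zero, sub_zero]; exact hv
  have key : ∃ n, good 68 (n >>> 34) = true ∧ okCode n = true ∧ dec n = v := by
    by_cases hl : (∑ k ∈ Finset.range 34, if co v k ≠ 0 then 1 else 0) ≤ 5
    · exact scan_left scan_code_L (by decide +kernel) (by simp) v hv0 hl
    · exact scan_right scan_code_R (by decide +kernel) (by simp) v hv0 (by omega)
  obtain ⟨n, h4, h5, rfl⟩ := key
  rcases okCode_spec h4 h5 with h6 | h6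
  · exact hne h6
  · exact hlt h6

lemma shadL_left : ∀ k < 34, shadL.testBit (34 + 7 * k) = false := by decide +kernel
lemma shadR_right : ∀ k < 34, shadR.testBit (34 + 7 * (34 + k)) = false := by decide +kernel

lemma good_xor' {n m : ℕ} (hn : good 68 (n >>> 34) = true) (hm : good 68 (m >>> 34) = true) :
    good 68 ((Nat.xor n m) >>> 34) = true := by
  have : (n ^^^ m) >>> 34 = n >>> 34 ^^^ m >>> 34 := Nat.shiftRight_xor_distrib
  change good 68 ((n ^^^ m) >>> 34) = true
  rw [this]
  exact good_xor _ _ _ hn hm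

lemma shadL_mem : dec shadL + dec shadV ∈ theCode := by
  rw [← dec_xor]
  exact mem_of_dotN _ (good_xor' shadL_good shadV_good) (by decide +kernel)

lemma shadR_mem : dec shadR + dec shadV ∈ theCode := by
  rw [← dec_xor]
  exact mem_of_dotN _ (good_xor' shadR_good shadV_good) (by decide +kernel)

lemma low_orth : ∀ n ∈ lowShadow, ∀ r ∈ rowsL, dotN (Nat.xor n shadV) r = 0 := by
  decide +kernel

lemma low_mem : ∀ n ∈ lowShadow, dec n + dec shadV ∈ theCode := by
  intro n hn
  rw [← dec_xor]
  exact mem_of_dotN _ (good_xor' (low_good n hn) shadV_good) (low_orth n hn)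

lemma low_shadow (u : Fin 68 → ZMod 2) (hu : u + dec shadV ∈ theCode)
    (hlt : hammingNorm u ≤ 10) : ∃ n ∈ lowShadow, dec n = u := by
  have h3 := norm_split u
  have key : ∃ n, good 68 (n >>> 34) = true ∧ okShadow n = true ∧ dec n = u := by
    by_cases hl : (∑ k ∈ Finset.range 34, if co u k ≠ 0 then 1 else 0) ≤ 5
    · refine scan_left scan_shadow_L shadL_good shadL_left u ?_ hl
      have := theCode.sub_mem hu shadL_mem
      simpa using this
    · refine scan_right scan_shadow_R shadR_good shadR_right u ?_ (by omega)
      have := theCode.sub_mem hu shadR_mem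
      simpa using this
  obtain ⟨n, h4, h5, rfl⟩ := key
  rcases okShadow_spec h4 h5 with h6 | h6
  · exact h6
  · omega

/-! ### Weight distributions -/

open Classical in
/-- Number of words of weight `w` in the coset of `s`. -/
noncomputable def cnt {ι : Type*} [Fintype ι] (C : Submodule (ZMod 2) (ι → ZMod 2))
    (s : ι → ZMod 2) (w : ℕ) : ℕ :=
  (Finset.univ.filter fun v => v + s ∈ C ∧ hammingNorm v = w).card

open Classical in
lemma sum_weights {ι : Type*} [Fintype ι] [DecidableEq ι] (C : Submodule (ZMod 2) (ι → ZMod 2))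
    (N : ℕ) (hN : Fintype.card ι = N) (s : ι → ZMod 2) (f : ℕ → ℤ) :
    ∑ v ∈ Finset.univ.filter (fun v => v + s ∈ C), f (hammingNorm v)
      = ∑ w ∈ Finset.range (N + 1), (cnt C s w : ℤ) * f w := by
  rw [← Finset.sum_fiberwise_of_maps_to (t := Finset.range (N + 1)) (g := hammingNorm)
    (fun v _ => Finset.mem_range.mpr
      (Nat.lt_succ_of_le (hN ▸ hammingNorm_le_card_fintype)))]
  refine Finset.sum_congr rfl fun w _ => ?_
  rw [Finset.filter_filter, Finset.sum_congr rfl (g := fun _ => f w)]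
  · rw [Finset.sum_const, nsmul_eq_mul, cnt]
    congr!
  · intro v hv
    rw [(Finset.mem_filter.mp hv).2.2]

open Classical in
lemma sum_weights_code {ι : Type*} [Fintype ι] [DecidableEq ι]
    (C : Submodule (ZMod 2) (ι → ZMod 2)) (N : ℕ) (hN : Fintype.card ι = N) (f : ℕ → ℤ) :
    ∑ v ∈ Finset.univ.filter (fun v => v ∈ C), f (hammingNorm v)
      = ∑ w ∈ Finset.range (N + 1), (cnt C 0 w : ℤ) * f w := by
  rw [← sum_weights C N hN]
  simp only [add_zero]

lemma cnt_zero {ι : Type*} [Fintype ι] (C : Submodule (ZMod 2) (ι → ZMod 2))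
    (s : ι → ZMod 2) (w : ℕ)
    (h : ∀ v, v + s ∈ C → hammingNorm v ≠ w) : cnt C s w = 0 := by
  classical
  rw [cnt, Finset.card_eq_zero]
  refine Finset.filter_eq_empty_iff.mpr ?_
  rintro v - ⟨h1, h2⟩
  exact h v h1 h2

lemma cnt_code_zero {ι : Type*} [Fintype ι] (C : Submodule (ZMod 2) (ι → ZMod 2)) :
    cnt C 0 0 = 1 := by
  classical
  rw [cnt, Finset.card_eq_one]
  refine ⟨0, ?_⟩
  ext v
  simp only [Finset.mem_filter, Finset.mem_univ, true_and, Finset.mem_singleton, add_zero,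
    hammingNorm_eq_zero]
  constructor
  · exact fun h => h.2
  · rintro rfl; exact ⟨C.zero_mem, rfl⟩

lemma cnt_sym_aux {ι : Type*} [Fintype ι] (C : Submodule (ZMod 2) (ι → ZMod 2))
    (h1 : 1 ∈ C) (N : ℕ) (hc : ∀ v : ι → ZMod 2, hammingNorm (v + 1) = N - hammingNorm v)
    (hz : ∀ v : ι → ZMod 2, v + v = 0)
    (s : ι → ZMod 2) (w : ℕ) (hw : w ≤ N) : cnt C s (N - w) = cnt C s w := by
  classical
  unfold cnt
  refine Finset.card_bij' (fun v _ => v + 1) (fun v _ => v + 1) ?_ ?_ ?_ ?_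
  · intro v hv
    simp only [Finset.mem_filter, Finset.mem_univ, true_and] at hv ⊢
    refine ⟨?_, by rw [hc, hv.2]; omega⟩
    rw [add_right_comm]; exact C.add_mem hv.1 h1
  · intro v hv
    simp only [Finset.mem_filter, Finset.mem_univ, true_and] at hv ⊢
    refine ⟨?_, by rw [hc, hv.2]⟩
    rw [add_right_comm]; exact C.add_mem hv.1 h1
  · intro v _; simp only [add_assoc, hz, add_zero]
  · intro v _; simp only [add_assoc, hz, add_zero]

lemma cnt_list {ι : Type*} [Fintype ι] (C : Submodule (ZMod 2) (ι → ZMod 2))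
    (s : ι → ZMod 2) (w : ℕ) (l : List ℕ) (d : ℕ → ι → ZMod 2)
    (h1 : ∀ v, v + s ∈ C → hammingNorm v = w → ∃ n ∈ l, d n = v)
    (h2 : ∀ n ∈ l, d n + s ∈ C ∧ hammingNorm (d n) = w)
    (h3 : ∀ n ∈ l, ∀ m ∈ l, d n = d m → n = m) :
    cnt C s w = l.toFinset.card := by
  classical
  have hi : Set.InjOn d (l.toFinset : Set ℕ) := by
    intro n hn m hm h
    exact h3 n (by simpa using hn) m (by simpa using hm) h
  rw [cnt, ← Finset.card_image_of_injOn hi]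
  congr 1
  ext v
  simp only [Finset.mem_filter, Finset.mem_univ, true_and, Finset.mem_image, List.mem_toFinset]
  constructor
  · rintro ⟨h, h'⟩
    exact h1 v h h'
  · rintro ⟨n, hn, rfl⟩
    exact h2 n hn

open Classical in
lemma card_code {ι : Type*} [Fintype ι] [DecidableEq ι] (C : Submodule (ZMod 2) (ι → ZMod 2))
    (hC : IsSelfDual C) (k : ℕ) (hk : Fintype.card ι = 2 * k) :
    ((Finset.univ.filter (· ∈ C)).card : ℤ) = 2 ^ k := by
  have h := macWilliams C hC 0 1
  simp only [add_zero, one_pow, Pi.zero_apply, mul_zero, Finset.sum_const_zero, sub_self,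
    Finset.sum_const, nsmul_eq_mul, mul_one] at h
  have h0 : sg 0 = 1 := rfl
  simp only [h0, one_mul] at h
  rw [sum_weights_code C _ hk (fun w => 0 ^ w * (1 + 1) ^ (Fintype.card ι - w)),
    Finset.sum_eq_single 0] at h
  · rw [cnt_code_zero, hk] at h
    have h2 : (((Finset.univ.filter (· ∈ C)).card : ℤ)) ^ 2 = (2 ^ k) ^ 2 := by
      rw [sq, h, ← pow_mul, mul_comm 2 k]; norm_num
    exact (sq_eq_sq₀ (by positivity) (by positivity)).mp h2
  · intro b _ hb
    simp [hb]
  · simp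

lemma mac_shadow_gen {ι : Type*} [Fintype ι] [DecidableEq ι]
    (C : Submodule (ZMod 2) (ι → ZMod 2))
    (hC : IsSelfDual C) (k N : ℕ) (hk : Fintype.card ι = 2 * k) (hN : Fintype.card ι = N)
    (s : ι → ZMod 2) (g : ℕ → ZMod 2)
    (hs : ∀ c ∈ C, ∑ i, c i * s i = g (hammingNorm c)) (z : ℤ) :
    2 ^ k * ∑ w ∈ Finset.range (N + 1), (cnt C s w : ℤ) * z ^ w
      = ∑ w ∈ Finset.range (N + 1), (cnt C 0 w : ℤ) * (sg (g w) *
          ((1 - z) ^ w * (1 + z) ^ (N - w))) := by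
  classical
  have h := macWilliams C hC s z
  rw [card_code C hC k hk, sum_weights C N hN _ (fun w => z ^ w)] at h
  rw [h, ← sum_weights_code C N hN (fun w => sg (g w) * ((1 - z) ^ w * (1 + z) ^ (N - w)))]
  refine Finset.sum_congr rfl fun c hc => ?_
  rw [hs c (Finset.mem_filter.mp hc).2, hN]

lemma ncard_eq {ι : Type*} [Fintype ι] (C : Submodule (ZMod 2) (ι → ZMod 2)) (w : ℕ) :
    {v | v ∈ C ∧ hammingNorm v = w}.ncard = cnt C 0 w := by
  classical
  rw [cnt, ← Set.ncard_coe_finset]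
  congr 1
  ext v
  simp

lemma one_mem : (1 : Fin 68 → ZMod 2) ∈ theCode := by
  rw [mem_iff]
  intro c hc
  simp only [Pi.one_apply, one_mul]
  rw [sum_eq_norm]
  have h := code_even hc
  rw [← ZMod.natCast_mod, h]; rfl

lemma norm_one (ι : Type*) [Fintype ι] :
    hammingNorm (1 : ι → ZMod 2) = Fintype.card ι := by
  simp [hammingNorm]

lemma norm_compl (v : Fin 68 → ZMod 2) : hammingNorm (v + 1) = 68 - hammingNorm v := by
  have h := norm_add v 1
  rw [mul_one, norm_one, Fintype.card_fin] at h
  omega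

lemma cnt_sym (s : Fin 68 → ZMod 2) (w : ℕ) (hw : w ≤ 68) :
    cnt theCode s (68 - w) = cnt theCode s w :=
  cnt_sym_aux theCode one_mem 68 norm_compl zmod2_self s w hw

lemma low_sep : ∀ n ∈ lowShadow, ∀ m ∈ lowShadow,
    ((Nat.xor n m) >>> 34) % 127 = 0 → n = m := by decide +kernel

lemma cnt_shadow (w : ℕ) (hw : w ≤ 10) :
    cnt theCode (dec shadV) w
      = (lowShadow.filter fun n => (n >>> 34) % 127 = w).toFinset.card := by
  have hl : ∀ n, n ∈ (lowShadow.filter fun n => (n >>> 34) % 127 = w) ↔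
      n ∈ lowShadow ∧ (n >>> 34) % 127 = w := fun n => by
    rw [List.mem_filter, decide_eq_true_eq]
  refine cnt_list theCode _ w _ dec ?_ ?_ ?_
  · intro v h1 h2
    obtain ⟨n, hn, rfl⟩ := low_shadow v h1 (by omega)
    rw [norm_dec _ (low_good n hn)] at h2
    exact ⟨n, (hl n).mpr ⟨hn, h2⟩, rfl⟩
  · intro n hn
    obtain ⟨hn, h2⟩ := (hl n).mp hn
    exact ⟨low_mem n hn, by rw [norm_dec _ (low_good n hn), h2]⟩
  · intro n hn m hm h
    have hn := ((hl n).mp hn).1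
    have hm := ((hl m).mp hm).1
    refine low_sep n hn m hm ?_
    rw [← norm_dec _ (good_xor' (low_good n hn) (low_good m hm)), dec_xor, h, zmod2_self]
    exact hammingNorm_zero

lemma mac_code (z : ℤ) : 2 ^ 34 * ∑ w ∈ Finset.range 69, (cnt theCode 0 w : ℤ) * z ^ w
      = ∑ w ∈ Finset.range 69, (cnt theCode 0 w : ℤ) * ((1 - z) ^ w * (1 + z) ^ (68 - w)) := by
  have h := mac_shadow_gen theCode selfDual 34 68 (Fintype.card_fin 68) (Fintype.card_fin 68) 0
    (fun _ => 0) (fun c _ => by simp only [Pi.zero_apply, mul_zero, Finset.sum_const_zero]) z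
  have h0 : sg 0 = 1 := rfl
  simp only [h0, one_mul] at h
  exact h

lemma mac_shadow (z : ℤ) :
    2 ^ 34 * ∑ w ∈ Finset.range 69, (cnt theCode (dec shadV) w : ℤ) * z ^ w
      = ∑ w ∈ Finset.range 69, (cnt theCode 0 w : ℤ) * (sg ((w / 2 : ℕ) : ZMod 2) *
          ((1 - z) ^ w * (1 + z) ^ (68 - w))) :=
  mac_shadow_gen theCode selfDual 34 68 (Fintype.card_fin 68) (Fintype.card_fin 68) (dec shadV)
    (fun w => ((w / 2 : ℕ) : ZMod 2)) (fun _ hc => shadow_char hc) z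

lemma a_low (w : ℕ) (h0 : 0 < w) (h12 : w < 12) : cnt theCode 0 w = 0 := by
  refine cnt_zero _ _ _ fun v hv h => ?_
  rw [add_zero] at hv
  have hne : v ≠ 0 := by
    rintro rfl
    rw [hammingNorm_zero] at h; omega
  have := min_weight v hv hne
  omega

lemma a_odd (w : ℕ) (h1 : w % 2 = 1) : cnt theCode 0 w = 0 := by
  refine cnt_zero _ _ _ fun v hv h => ?_
  rw [add_zero] at hv
  have := code_even hv
  omega

lemma b_mod (w : ℕ) (h1 : w % 4 ≠ 2) : cnt theCode (dec shadV) w = 0 := by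
  refine cnt_zero _ _ _ fun v hv h => ?_
  have := shadow_mod hv
  omega

lemma b_two : cnt theCode (dec shadV) 2 = 0 := by
  rw [cnt_shadow 2 (by norm_num)]; decide +kernel

lemma b_six : cnt theCode (dec shadV) 6 = 2 := by
  rw [cnt_shadow 6 (by norm_num)]; decide +kernel

lemma b_ten : cnt theCode (dec shadV) 10 = 33 := by
  rw [cnt_shadow 10 (by norm_num)]; decide +kernel

lemma weights : cnt theCode 0 12 = 686 ∧ cnt theCode 0 14 = 13960 := by
  have h := final_solve (fun w => (cnt theCode 0 w : ℤ))
    (fun w => (cnt theCode (dec shadV) w : ℤ))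
    mac_code mac_shadow (congrArg (Nat.cast : ℕ → ℤ) (cnt_code_zero theCode))
    (fun w h0 h1 => congrArg (Nat.cast : ℕ → ℤ) (a_low w h0 h1))
    (fun w h1 => congrArg (Nat.cast : ℕ → ℤ) (a_odd w h1))
    (fun w hw => congrArg (Nat.cast : ℕ → ℤ) (cnt_sym 0 w hw))
    (fun w h1 => congrArg (Nat.cast : ℕ → ℤ) (b_mod w h1))
    (congrArg (Nat.cast : ℕ → ℤ) b_two)
    (congrArg (Nat.cast : ℕ → ℤ) b_six)
    (congrArg (Nat.cast : ℕ → ℤ) b_ten)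
    (fun w hw => congrArg (Nat.cast : ℕ → ℤ) (cnt_sym _ w hw))
  exact ⟨Int.ofNat.inj h.1, Int.ofNat.inj h.2⟩

/-- There exists a binary self-dual `[68, 34, 12]` code with weight enumerator
`W_{68,2}` (γ = 2, β = 61): minimum nonzero weight 12, exactly 686 codewords of weight 12
and exactly 13960 codewords of weight 14. -/
theorem exists_selfDual_68_14 :
    ∃ C : Submodule (ZMod 2) (Fin 68 → ZMod 2),
      IsSelfDual C ∧
      (∀ v ∈ C, v ≠ 0 → 12 ≤ hammingNorm v) ∧
      (∃ v ∈ C, hammingNorm v = 12) ∧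
      {v | v ∈ C ∧ hammingNorm v = 12}.ncard = 686 ∧
      {v | v ∈ C ∧ hammingNorm v = 14}.ncard = 13960 := by
  have h12 : {v | v ∈ theCode ∧ hammingNorm v = 12}.ncard = 686 := by
    rw [ncard_eq]; exact weights.1
  have h14 : {v | v ∈ theCode ∧ hammingNorm v = 14}.ncard = 13960 := by
    rw [ncard_eq]; exact weights.2
  refine ⟨theCode, selfDual, min_weight, ?_, h12, h14⟩
  have hne : {v | v ∈ theCode ∧ hammingNorm v = 12}.Nonempty := by
    refine Set.nonempty_of_ncard_ne_zero ?_
    rw [h12]; norm_num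
  obtain ⟨v, hv⟩ := hne
  exact ⟨v, hv.1, hv.2⟩
end
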